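/- Let μ ∈ (0,1] and let 2 < q ≤ ∞ and 2 ≤ r ≤ ∞ satisfy 2/q = 1/2 − 1/r. There is a constant C = C(q,r), independent of μ and λ, such that for every λ > 0 and every Schwartz function f on ℝ, (∫_ℝ ‖S_{μ,1}(t) P_λ f‖_{L^r(ℝ)}^q dt)^{1/q} ≤ C ( μ^{-1/2} λ^{-1/2} ⟨√μ λ⟩^{5/4} )^{1/2 − 1/r} ‖P_λ f‖_{L^2(ℝ)} (with the usual modification of the time norm when q = ∞). -/

import Mathlib

noncomputable section

open MeasureTheory SchwartzMap
open scoped FourierTransform ENNReal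

/-- The Japanese bracket `⟨x⟩ = (1 + x²)^{1/2}`. -/
def jap (x : ℝ) : ℝ := (1 + x ^ 2) ^ ((1 : ℝ) / 2)

/-- The symbol `m₁(ξ) = ξ (tanh|ξ|/|ξ|)^{1/2}`, with `m₁(0) = 0`. -/
def m1 (ξ : ℝ) : ℝ :=
  if ξ = 0 then 0 else ξ * Real.sqrt (Real.tanh |ξ| / |ξ|)

/-- The propagator `S_{μ,1}(t) f = (e^{i(t/√μ) m₁(√μ ξ)} f̂(ξ))^∨`. -/
def prop1 (μ t : ℝ) (f : ℝ → ℂ) : ℝ → ℂ :=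
  𝓕⁻ (fun ξ : ℝ =>
    Complex.exp (Complex.I * ((t / Real.sqrt μ) * m1 (Real.sqrt μ * ξ) : ℝ)) * 𝓕 f ξ)

/-- Littlewood–Paley projection `P_λ`, `(P_λ f)^(ξ) = β(|ξ|/λ) f̂(ξ)`, `β(s)=χ(s)-χ(2s)`. -/
def proj1 (χ : ℝ → ℝ) (lam : ℝ) (f : ℝ → ℂ) : ℝ → ℂ :=
  𝓕⁻ (fun ξ : ℝ => ((χ (|ξ| / lam) - χ (2 * |ξ| / lam) : ℝ) : ℂ) * 𝓕 f ξ)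

/-- The `L^q(ℝ)`-norm in time of an `ℝ≥0∞`-valued quantity,
`(∫_ℝ g(t)^q dt)^{1/q}`, with the usual modification (essential supremum) when `q = ∞`. -/
def timeNorm (q : ℝ≥0∞) (g : ℝ → ℝ≥0∞) : ℝ≥0∞ :=
  if q = ∞ then essSup g volume
  else (∫⁻ t : ℝ, g t ^ q.toReal) ^ (1 / q.toReal)

/-!
For `x > 0` one has `m₁''(x) ≤ -c x ⟨x⟩^{-5/2}`, so van der Corput's second derivative test on the
two halves of the annulus `λ/2 < |ξ| ≤ 2λ`, cut off sharply, bounds the kernel of `S_{μ,1}(t) P_λ`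
by a multiple of `A |t|^{-1/2}` with `A = μ^{-1/2} λ^{-1/2} ⟨√μ λ⟩^{5/4}`, uniformly in `x`.

Combining this bound with the one-dimensional Hardy-Littlewood-Sobolev inequality in time, the `TT*`
method gives the endpoint `L⁴_t L^∞_x`. The supremum over `x` is linearized by a measurable choice
`x = x(t)`, as in the Kolmogorov-Seliverstov-Plessner method; since the kernel bound does not depend
on `x`, the choice costs nothing. All other admissible pairs follow by interpolating with the
conserved `L²` norm.
-/

open scoped ComplexConjugate

/-! ### Van der Corput's lemma -/

section VanDerCorput

variable {ψ ψ' ψ'' : ℝ → ℝ} {a b : ℝ}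

lemma integral_exp_I_mul_eq_sub_integral_deriv_inv_mul (hab : a ≤ b)
    (hψ : ∀ x ∈ Set.Icc a b, HasDerivAt ψ (ψ' x) x)
    (hψ' : ∀ x ∈ Set.Icc a b, HasDerivAt ψ' (ψ'' x) x)
    (hcont : ContinuousOn ψ'' (Set.Icc a b)) (hne : ∀ x ∈ Set.Icc a b, ψ' x ≠ 0) :
    ∫ x in a..b, Complex.exp (Complex.I * ψ x) =
      ((ψ' b)⁻¹ : ℝ) * (-Complex.I * Complex.exp (Complex.I * ψ b)) -
        ((ψ' a)⁻¹ : ℝ) * (-Complex.I * Complex.exp (Complex.I * ψ a)) -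
        ∫ x in a..b, ((-ψ'' x / ψ' x ^ 2 : ℝ) : ℂ) *
          (-Complex.I * Complex.exp (Complex.I * ψ x)) := by
  rw [← Set.uIcc_of_le hab] at *
  have hψc : ContinuousOn ψ (Set.uIcc a b) := HasDerivAt.continuousOn hψ
  have hψ'c : ContinuousOn ψ' (Set.uIcc a b) := HasDerivAt.continuousOn hψ'
  have hexp : ∀ x ∈ Set.uIcc a b, HasDerivAt (fun y ↦ -Complex.I * Complex.exp (Complex.I * ψ y))
      (ψ' x * Complex.exp (Complex.I * ψ x)) x := fun x hx ↦ by
    refine (((hψ x hx).ofReal_comp.const_mul Complex.I).cexp.const_mul _).congr_deriv ?_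
    linear_combination -(ψ' x * Complex.exp (Complex.I * ψ x)) * Complex.I_sq
  have hinv' : ContinuousOn (fun x ↦ -ψ'' x / ψ' x ^ 2) (Set.uIcc a b) :=
    hcont.neg.div (hψ'c.pow 2) fun x hx ↦ pow_ne_zero 2 (hne x hx)
  have hexp' : ContinuousOn (fun x ↦ ψ' x * Complex.exp (Complex.I * ψ x)) (Set.uIcc a b) := by
    fun_prop
  refine Eq.trans (intervalIntegral.integral_congr fun x hx ↦ ?_)
    (intervalIntegral.integral_mul_deriv_eq_deriv_mul
      (fun x hx ↦ ((hψ' x hx).inv (hne x hx)).ofReal_comp) hexp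
      (Complex.continuous_ofReal.comp_continuousOn hinv').intervalIntegrable
      hexp'.intervalIntegrable)
  have : (ψ' x : ℂ) ≠ 0 := mod_cast hne x hx
  simp only [Pi.inv_apply]
  push_cast
  field_simp

lemma norm_integral_exp_I_mul_le_of_le_abs_deriv {δ : ℝ} (hab : a ≤ b) (hδ : 0 < δ)
    (hψ : ∀ x ∈ Set.Icc a b, HasDerivAt ψ (ψ' x) x)
    (hψ' : ∀ x ∈ Set.Icc a b, HasDerivAt ψ' (ψ'' x) x)
    (hcont : ContinuousOn ψ'' (Set.Icc a b)) (hnonneg : ∀ x ∈ Set.Icc a b, 0 ≤ ψ'' x)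
    (hle : ∀ x ∈ Set.Icc a b, δ ≤ |ψ' x|) :
    ‖∫ x in a..b, Complex.exp (Complex.I * ψ x)‖ ≤ 4 / δ := by
  have hne : ∀ x ∈ Set.Icc a b, ψ' x ≠ 0 := fun x hx ↦ abs_pos.1 (hδ.trans_le (hle x hx))
  have hinv : ∀ x ∈ Set.uIcc a b, HasDerivAt (fun y ↦ (ψ' y)⁻¹) (-ψ'' x / ψ' x ^ 2) x :=
    fun x hx ↦ by rw [Set.uIcc_of_le hab] at hx; exact (hψ' x hx).inv (hne x hx)
  have hvint : IntervalIntegrable (fun x ↦ -ψ'' x / ψ' x ^ 2) volume a b :=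
    ContinuousOn.intervalIntegrable <| by
      rw [Set.uIcc_of_le hab]
      exact hcont.neg.div ((HasDerivAt.continuousOn hψ').pow 2) fun x hx ↦
        pow_ne_zero 2 (hne x hx)
  have hbd : ∀ x ∈ Set.Icc a b, |(ψ' x)⁻¹| ≤ δ⁻¹ := fun x hx ↦ by
    rw [abs_inv]; exact inv_anti₀ hδ (hle x hx)
  have hnorm (y z : ℝ) : ‖(y : ℂ) * (-Complex.I * Complex.exp (Complex.I * z))‖ = |y| := by
    simp [Complex.norm_exp_I_mul_ofReal]
  -- Since `ψ'` is monotone, the total variation of `1 / ψ'` is `1 / ψ' a - 1 / ψ' b`.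
  have hvar : ‖∫ x in a..b, ((-ψ'' x / ψ' x ^ 2 : ℝ) : ℂ) *
      (-Complex.I * Complex.exp (Complex.I * ψ x))‖ ≤ (ψ' a)⁻¹ - (ψ' b)⁻¹ := by
    rw [← neg_sub, ← intervalIntegral.integral_eq_sub_of_hasDerivAt hinv hvint,
      ← intervalIntegral.integral_neg]
    refine intervalIntegral.norm_integral_le_of_norm_le hab (.of_forall fun x hx ↦ ?_) hvint.neg
    rw [hnorm, neg_div, abs_neg, neg_neg, abs_of_nonneg
      (div_nonneg (hnonneg x (Set.Ioc_subset_Icc_self hx)) (sq_nonneg _))]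
  calc ‖∫ x in a..b, Complex.exp (Complex.I * ψ x)‖
    _ ≤ |(ψ' b)⁻¹| + |(ψ' a)⁻¹| + ((ψ' a)⁻¹ - (ψ' b)⁻¹) := by
        rw [integral_exp_I_mul_eq_sub_integral_deriv_inv_mul hab hψ hψ' hcont hne,
          ← hnorm (ψ' b)⁻¹ (ψ b), ← hnorm (ψ' a)⁻¹ (ψ a)]
        exact (norm_sub_le _ _).trans (add_le_add (norm_sub_le _ _) hvar)
    _ ≤ δ⁻¹ + δ⁻¹ + (δ⁻¹ + δ⁻¹) := by
        linarith [hbd a (Set.left_mem_Icc.2 hab), hbd b (Set.right_mem_Icc.2 hab),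
          le_abs_self (ψ' a)⁻¹, neg_abs_le (ψ' b)⁻¹]
    _ = 4 / δ := by ring

lemma exists_mul_abs_sub_le_abs_of_le_deriv {g g' : ℝ → ℝ} {κ : ℝ} (hab : a ≤ b)
    (hg : ∀ x ∈ Set.Icc a b, HasDerivAt g (g' x) x) (hle : ∀ x ∈ Set.Icc a b, κ ≤ g' x) :
    ∃ c ∈ Set.Icc a b, ∀ x ∈ Set.Icc a b, κ * |x - c| ≤ |g x| := by
  have hc : ContinuousOn g (Set.Icc a b) := HasDerivAt.continuousOn hg
  have mvt : ∀ x ∈ Set.Icc a b, ∀ y ∈ Set.Icc a b, x ≤ y → κ * (y - x) ≤ g y - g x :=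
    (convex_Icc a b).mul_sub_le_image_sub_of_le_deriv hc
      (fun z hz ↦ (hg z (interior_subset hz)).differentiableAt.differentiableWithinAt)
      (fun z hz ↦ (hg z (interior_subset hz)).deriv ▸ hle z (interior_subset hz))
  have ha : a ∈ Set.Icc a b := Set.left_mem_Icc.2 hab
  have hb : b ∈ Set.Icc a b := Set.right_mem_Icc.2 hab
  rcases le_or_gt 0 (g a) with h0 | hneg
  · refine ⟨a, ha, fun x hx ↦ ?_⟩
    rw [abs_of_nonneg (sub_nonneg.2 hx.1)]
    linarith [mvt a ha x hx hx.1, le_abs_self (g x)]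
  rcases le_or_gt (g b) 0 with h0 | hpos
  · refine ⟨b, hb, fun x hx ↦ ?_⟩
    rw [abs_sub_comm, abs_of_nonneg (sub_nonneg.2 hx.2)]
    linarith [mvt x hx b hb hx.2, neg_abs_le (g x)]
  obtain ⟨c, hcm, h0⟩ := intermediate_value_Icc hab hc ⟨hneg.le, hpos.le⟩
  refine ⟨c, hcm, fun x hx ↦ ?_⟩
  rcases le_total c x with h | h
  · rw [abs_of_nonneg (sub_nonneg.2 h)]
    linarith [mvt c hcm x hx h, le_abs_self (g x)]
  · rw [abs_sub_comm, abs_of_nonneg (sub_nonneg.2 h)]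
    linarith [mvt x hx c hcm h, neg_abs_le (g x)]

lemma norm_integral_le_of_forall_norm_integral_le_of_le_abs_sub {f : ℝ → ℂ} {c η K : ℝ}
    (hc : c ∈ Set.Icc a b) (hη : 0 ≤ η) (hK : 0 ≤ K) (hf : IntervalIntegrable f volume a b)
    (hf_le : ∀ x, ‖f x‖ ≤ 1)
    (far : ∀ u v, a ≤ u → u ≤ v → v ≤ b → (∀ x ∈ Set.Icc u v, η ≤ |x - c|) →
      ‖∫ x in u..v, f x‖ ≤ K) :
    ‖∫ x in a..b, f x‖ ≤ K + 2 * η + K := by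
  obtain ⟨p, hap, hpc, hcp, hleft⟩ : ∃ p, a ≤ p ∧ p ≤ c ∧ c - p ≤ η ∧ ‖∫ x in a..p, f x‖ ≤ K := by
    rcases le_total (c - η) a with h | h
    · exact ⟨a, le_rfl, hc.1, by linarith, by simpa using hK⟩
    · refine ⟨c - η, h, by linarith, by linarith, far _ _ le_rfl h (by linarith [hc.2]) ?_⟩
      intro x hx
      exact le_abs.2 (.inr (by linarith [hx.2]))
  obtain ⟨s, hsb, hcs, hsc, hright⟩ :
      ∃ s, s ≤ b ∧ c ≤ s ∧ s - c ≤ η ∧ ‖∫ x in s..b, f x‖ ≤ K := by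
    rcases le_total b (c + η) with h | h
    · exact ⟨b, le_rfl, hc.2, by linarith, by simpa using hK⟩
    · refine ⟨c + η, h, by linarith, by linarith, far _ _ (by linarith [hc.1]) h le_rfl ?_⟩
      intro x hx
      exact le_abs.2 (.inl (by linarith [hx.1]))
  have hmid : ‖∫ x in p..s, f x‖ ≤ s - p := by
    simpa [abs_of_nonneg (sub_nonneg.2 (hpc.trans hcs))] using
      intervalIntegral.norm_integral_le_of_norm_le_const fun x (_ : x ∈ Set.uIoc p s) ↦ hf_le x
  have hab : a ≤ b := hc.1.trans hc.2
  have hint : ∀ u v, a ≤ u → u ≤ v → v ≤ b → IntervalIntegrable f volume u v := fun u v hu huv hv ↦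
    hf.mono_set (by simpa only [Set.uIcc_of_le huv, Set.uIcc_of_le hab] using
      Set.Icc_subset_Icc hu hv)
  rw [← intervalIntegral.integral_add_adjacent_intervals (b := s)
    (hint a s le_rfl (by linarith) hsb) (hint s b (by linarith) hsb le_rfl),
    ← intervalIntegral.integral_add_adjacent_intervals (b := p)
    (hint a p le_rfl hap (by linarith)) (hint p s hap (by linarith) hsb)]
  refine norm_add₃_le.trans ?_
  gcongr
  linarith

lemma norm_integral_exp_I_mul_le_of_le_deriv_deriv {κ : ℝ} (hab : a ≤ b) (hκ : 0 < κ)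
    (hψ : ∀ x ∈ Set.Icc a b, HasDerivAt ψ (ψ' x) x)
    (hψ' : ∀ x ∈ Set.Icc a b, HasDerivAt ψ' (ψ'' x) x)
    (hcont : ContinuousOn ψ'' (Set.Icc a b)) (hle : ∀ x ∈ Set.Icc a b, κ ≤ ψ'' x) :
    ‖∫ x in a..b, Complex.exp (Complex.I * ψ x)‖ ≤ 10 / √κ := by
  obtain ⟨c, hc, hgrowth⟩ := exists_mul_abs_sub_le_abs_of_le_deriv hab hψ' hle
  have hψc : ContinuousOn ψ (Set.Icc a b) := HasDerivAt.continuousOn hψ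
  have hs : 0 < √κ := Real.sqrt_pos.2 hκ
  have hint : IntervalIntegrable (fun x ↦ Complex.exp (Complex.I * ψ x)) volume a b :=
    ContinuousOn.intervalIntegrable (by rw [Set.uIcc_of_le hab]; fun_prop)
  -- Outside the window `|x - c| ≤ κ ^ (-1/2)` the first derivative is at least `√κ`.
  have far : ∀ u v, a ≤ u → u ≤ v → v ≤ b → (∀ x ∈ Set.Icc u v, 1 / √κ ≤ |x - c|) →
      ‖∫ x in u..v, Complex.exp (Complex.I * ψ x)‖ ≤ 4 / √κ := fun u v hau huv hvb hdist ↦ by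
    have hsub : Set.Icc u v ⊆ Set.Icc a b := Set.Icc_subset_Icc hau hvb
    refine norm_integral_exp_I_mul_le_of_le_abs_deriv huv hs (fun x hx ↦ hψ x (hsub hx))
      (fun x hx ↦ hψ' x (hsub hx)) (hcont.mono hsub)
      (fun x hx ↦ hκ.le.trans (hle x (hsub hx))) fun x hx ↦ ?_
    calc √κ = κ * (1 / √κ) := by rw [mul_one_div, Real.div_sqrt]
      _ ≤ κ * |x - c| := by gcongr; exact hdist x hx
      _ ≤ |ψ' x| := hgrowth x (hsub hx)
  refine (norm_integral_le_of_forall_norm_integral_le_of_le_abs_sub hc (by positivity)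
    (by positivity) hint (fun x ↦ (Complex.norm_exp_I_mul_ofReal _).le) far).trans_eq ?_
  ring

end VanDerCorput

/-! ### The Hardy–Littlewood–Sobolev inequality on the diagonal -/

section HardyLittlewoodSobolev

/-- The Riesz kernel `|u| ^ (-σ)` of order `1 - σ` on the line; it takes the (immaterial) value `0`
at `u = 0` when `σ ≠ 0`. -/
def rieszKernel (σ u : ℝ) : ℝ≥0∞ := ENNReal.ofReal (|u| ^ (-σ))

@[fun_prop]
lemma measurable_rieszKernel (σ : ℝ) : Measurable (rieszKernel σ) := by
  unfold rieszKernel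
  fun_prop

lemma rieszKernel_sub_comm (σ t s : ℝ) : rieszKernel σ (t - s) = rieszKernel σ (s - t) := by
  simp only [rieszKernel, abs_sub_comm]

lemma lintegral_comp_abs (h : ℝ → ℝ≥0∞) : ∫⁻ s, h |s| = 2 * ∫⁻ s in Set.Ioi 0, h s := by
  have hpos : ∫⁻ s in Set.Ioi 0, h |s| = ∫⁻ s in Set.Ioi 0, h s :=
    setLIntegral_congr_fun measurableSet_Ioi fun s hs ↦ by rw [abs_of_pos hs]
  have hneg : ∫⁻ s in Set.Iio 0, h |s| = ∫⁻ s in Set.Ioi 0, h |s| := by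
    rw [← lintegral_indicator measurableSet_Iio, ← lintegral_indicator measurableSet_Ioi,
      ← lintegral_neg_eq_self]
    congr 1 with s
    simp [Set.indicator_apply]
  rw [← lintegral_add_compl _ measurableSet_Ioi, Set.compl_Ioi,
    setLIntegral_congr Iio_ae_eq_Iic.symm, hneg, hpos, two_mul]

variable {σ : ℝ}

lemma lintegral_indicator_Iio_rpow_neg_abs (hσ : σ < 1) {R : ℝ} (hR : 0 < R) :
    ∫⁻ s, (Set.Iio R).indicator (fun u ↦ ENNReal.ofReal (u ^ (-σ))) |s| =
      ENNReal.ofReal (2 / (1 - σ) * R ^ (1 - σ)) := by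
  have hint : IntegrableOn (fun u : ℝ ↦ u ^ (-σ)) (Set.Ioc 0 R) :=
    (intervalIntegrable_iff_integrableOn_Ioc_of_le hR.le).1
      (intervalIntegral.intervalIntegrable_rpow' (by linarith))
  rw [lintegral_comp_abs, setLIntegral_indicator measurableSet_Iio, Set.Iio_inter_Ioi,
    setLIntegral_congr Ioo_ae_eq_Ioc, ← ofReal_integral_eq_lintegral_ofReal hint
      (ae_restrict_of_forall_mem measurableSet_Ioc fun u hu ↦ Real.rpow_nonneg hu.1.le _),
    ← intervalIntegral.integral_of_le hR.le, integral_rpow (.inl (by linarith)),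
    Real.zero_rpow (by linarith), ← ENNReal.ofReal_ofNat 2, ← ENNReal.ofReal_mul zero_le_two]
  congr 1
  rw [neg_add_eq_sub]
  ring

lemma lintegral_indicator_Ici_rpow_neg_abs_rpow (hσ : 0 < σ) {R : ℝ} (hR : 0 < R) :
    ∫⁻ s, (Set.Ici R).indicator (fun u ↦ ENNReal.ofReal (u ^ (-σ))) |s| ^ (2 / σ) =
      ENNReal.ofReal (2 / R) := by
  have hpow : ∀ s ∈ Set.Ioi R, ENNReal.ofReal (s ^ (-σ)) ^ (2 / σ) =
      ENNReal.ofReal (s ^ (-2 : ℝ)) := fun s hs ↦ by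
    have hs0 : 0 < s := hR.trans hs
    rw [ENNReal.ofReal_rpow_of_pos (by positivity), ← Real.rpow_mul hs0.le]
    congr 2
    field_simp
  have hzero : (0 : ℝ≥0∞) ^ (2 / σ) = 0 := ENNReal.zero_rpow_of_pos (by positivity)
  calc ∫⁻ s, (Set.Ici R).indicator (fun u ↦ ENNReal.ofReal (u ^ (-σ))) |s| ^ (2 / σ)
    _ = 2 * ∫⁻ s in Set.Ioi 0, (Set.Ici R).indicator
          (fun u ↦ ENNReal.ofReal (u ^ (-σ)) ^ (2 / σ)) s := by
        rw [lintegral_comp_abs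
          fun s ↦ (Set.Ici R).indicator (fun u ↦ ENNReal.ofReal (u ^ (-σ))) s ^ (2 / σ)]
        congr 2 with s
        exact (congr_fun (Set.indicator_comp_of_zero (g := (· ^ (2 / σ))) hzero) s).symm
    _ = 2 * ∫⁻ s in Set.Ioi R, ENNReal.ofReal (s ^ (-2 : ℝ)) := by
        rw [setLIntegral_indicator measurableSet_Ici,
          Set.inter_eq_left.2 (Set.Ici_subset_Ioi.2 hR), setLIntegral_congr Ioi_ae_eq_Ici.symm,
          setLIntegral_congr_fun measurableSet_Ioi hpow]
    _ = ENNReal.ofReal (2 / R) := by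
        rw [← ofReal_integral_eq_lintegral_ofReal (integrableOn_Ioi_rpow_of_lt (by norm_num) hR)
            (ae_restrict_of_forall_mem measurableSet_Ioi fun s hs ↦
              Real.rpow_nonneg (hR.trans hs).le _),
          integral_Ioi_rpow_of_lt (by norm_num) hR, ← ENNReal.ofReal_ofNat 2,
          ← ENNReal.ofReal_mul zero_le_two]
        norm_num [Real.rpow_neg_one, div_eq_mul_inv]

-- The two contributions are balanced at the radius `R = N c ^ (-p)`, where `p = 2 / (2 - σ)`.
lemma hls_near_add_far_le (hσ0 : 0 < σ) (hσ1 : σ < 1) {N c : ℝ} (hN : 0 < N) (hc : 0 < c) :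
    c * (2 / (1 - σ) * (N * c ^ (-(2 / (2 - σ)))) ^ (1 - σ)) +
        N ^ ((2 - σ) / 2) * (2 / (N * c ^ (-(2 / (2 - σ))))) ^ (σ / 2) ≤
      4 / (1 - σ) * N ^ (1 - σ) * c ^ (σ / (2 - σ)) := by
  have hσ2 : 2 - σ ≠ 0 := by linarith
  have hpos : 0 < σ / (2 - σ) := div_pos hσ0 (by linarith)
  have hexp : 1 + -(2 / (2 - σ)) * (1 - σ) = σ / (2 - σ) := by field_simp; ring
  have hnear : c * (N * c ^ (-(2 / (2 - σ)))) ^ (1 - σ) = N ^ (1 - σ) * c ^ (σ / (2 - σ)) := by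
    rw [Real.mul_rpow hN.le (by positivity), ← Real.rpow_mul hc.le, mul_left_comm,
      ← Real.rpow_one_add' hc.le (hexp ▸ hpos.ne'), hexp]
  have hfar : N ^ ((2 - σ) / 2) * (2 / (N * c ^ (-(2 / (2 - σ))))) ^ (σ / 2) =
      2 ^ (σ / 2) * (N ^ (1 - σ) * c ^ (σ / (2 - σ))) := by
    rw [Real.div_rpow zero_le_two (by positivity), Real.mul_rpow hN.le (by positivity),
      ← Real.rpow_mul hc.le, show (1 - σ) = (2 - σ) / 2 - σ / 2 by ring, Real.rpow_sub hN,
      show -(2 / (2 - σ)) * (σ / 2) = -(σ / (2 - σ)) by field_simp, Real.rpow_neg hc.le]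
    field_simp
  have htwo : (2 : ℝ) ^ (σ / 2) ≤ 2 / (1 - σ) := calc
    (2 : ℝ) ^ (σ / 2) ≤ 2 ^ (1 : ℝ) := Real.rpow_le_rpow_of_exponent_le one_le_two (by linarith)
    _ ≤ 2 / (1 - σ) := by rw [Real.rpow_one, le_div_iff₀ (by linarith)]; linarith
  calc _ = (2 / (1 - σ) + 2 ^ (σ / 2)) * (N ^ (1 - σ) * c ^ (σ / (2 - σ))) := by
        rw [hfar, mul_left_comm, hnear]; ring
    _ ≤ (2 / (1 - σ) + 2 / (1 - σ)) * (N ^ (1 - σ) * c ^ (σ / (2 - σ))) := by gcongr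
    _ = _ := by ring

lemma lintegral_indicator_le_mul_rieszKernel_le (hσ0 : 0 < σ) (hσ1 : σ < 1) {g : ℝ → ℝ≥0∞}
    (hg : Measurable g) {N c : ℝ} (hN : 0 < N) (hc : 0 < c)
    (hgN : ∫⁻ s, g s ^ (2 / (2 - σ)) = ENNReal.ofReal N) (t : ℝ) :
    ∫⁻ s, {s | g s ≤ ENNReal.ofReal c}.indicator g s * rieszKernel σ (t - s) ≤
      ENNReal.ofReal (4 / (1 - σ) * N ^ (1 - σ) * c ^ (σ / (2 - σ))) := by
  have hσ2 : 0 < 2 - σ := by linarith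
  set R : ℝ := N * c ^ (-(2 / (2 - σ)))
  have hR : 0 < R := by positivity
  set near := (Set.Iio R).indicator fun u : ℝ ↦ ENNReal.ofReal (u ^ (-σ))
  set far := (Set.Ici R).indicator fun u : ℝ ↦ ENNReal.ofReal (u ^ (-σ))
  have hnear : Measurable near := Measurable.indicator (by fun_prop) measurableSet_Iio
  have hfar : Measurable far := Measurable.indicator (by fun_prop) measurableSet_Ici
  have hsplit (s : ℝ) : {s | g s ≤ ENNReal.ofReal c}.indicator g s * rieszKernel σ (t - s) ≤
      ENNReal.ofReal c * near |t - s| + g s * far |t - s| := by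
    have hk : rieszKernel σ (t - s) = near |t - s| + far |t - s| := by
      simp only [near, far, ← Set.compl_Iio]
      exact (congr_fun (Set.indicator_self_add_compl (Set.Iio R)
        fun u ↦ ENNReal.ofReal (u ^ (-σ))) |t - s|).symm
    rw [hk, mul_add]
    gcongr
    · exact Set.indicator_apply_le' id fun _ ↦ zero_le
    · exact Set.indicator_le_self _ _ _
  have hholder := ENNReal.lintegral_mul_le_Lp_mul_Lq volume (p := 2 / (2 - σ)) (q := 2 / σ)
    (Real.holderConjugate_iff.2 ⟨by rw [lt_div_iff₀ hσ2]; linarith, by field_simp; ring⟩)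
    hg.aemeasurable (g := fun s ↦ far |t - s|) (by fun_prop)
  rw [lintegral_sub_left_eq_self (fun s ↦ far |s| ^ (2 / σ)) t,
    lintegral_indicator_Ici_rpow_neg_abs_rpow hσ0 hR, hgN, one_div_div, one_div_div,
    ENNReal.ofReal_rpow_of_pos hN, ENNReal.ofReal_rpow_of_pos (by positivity),
    ← ENNReal.ofReal_mul (by positivity)] at hholder
  calc _ ≤ ∫⁻ s, (ENNReal.ofReal c * near |t - s| + g s * far |t - s|) := lintegral_mono hsplit
    _ = ENNReal.ofReal c * ENNReal.ofReal (2 / (1 - σ) * R ^ (1 - σ)) +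
        ∫⁻ s, g s * far |t - s| := by
      rw [lintegral_add_left (by fun_prop), lintegral_const_mul _ (by fun_prop),
        lintegral_sub_left_eq_self (fun s ↦ near |s|) t,
        lintegral_indicator_Iio_rpow_neg_abs hσ1 hR]
    _ ≤ _ := add_le_add_right hholder _
    _ ≤ _ := by
      have : 0 < 1 - σ := by linarith
      rw [← ENNReal.ofReal_mul hc.le, ← ENNReal.ofReal_add (by positivity) (by positivity)]
      exact ENNReal.ofReal_le_ofReal (hls_near_add_far_le hσ0 hσ1 hN hc)

lemma mul_lintegral_indicator_le_mul_rieszKernel_le (hσ0 : 0 < σ) (hσ1 : σ < 1) {g : ℝ → ℝ≥0∞}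
    (hg : Measurable g) {N : ℝ} (hN : 0 < N) {c : ℝ≥0∞} (hc : c ≠ ∞)
    (hgN : ∫⁻ s, g s ^ (2 / (2 - σ)) = ENNReal.ofReal N) (t : ℝ) :
    c * ∫⁻ s, {s | g s ≤ c}.indicator g s * rieszKernel σ (t - s) ≤
      ENNReal.ofReal (4 / (1 - σ) * N ^ (1 - σ)) * c ^ (2 / (2 - σ)) := by
  have hσ2 : 0 < 2 - σ := by linarith
  have : 0 < 1 - σ := by linarith
  rcases eq_or_ne c 0 with rfl | hc0
  · simp
  obtain ⟨x, hx, rfl⟩ : ∃ x : ℝ, 0 < x ∧ c = ENNReal.ofReal x :=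
    ⟨_, ENNReal.toReal_pos hc0 hc, (ENNReal.ofReal_toReal hc).symm⟩
  refine (mul_le_mul_right (lintegral_indicator_le_mul_rieszKernel_le hσ0 hσ1 hg hN hx hgN t)
    _).trans_eq ?_
  have hexp : 2 / (2 - σ) = 1 + σ / (2 - σ) := by field_simp; ring
  rw [ENNReal.ofReal_rpow_of_pos hx, hexp, Real.rpow_add hx, Real.rpow_one,
    ← ENNReal.ofReal_mul hx.le, ← ENNReal.ofReal_mul (by positivity)]
  ring_nf

lemma lintegral_lintegral_indicator_le_mul_rieszKernel_le (hσ0 : 0 < σ) (hσ1 : σ < 1)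
    {g : ℝ → ℝ≥0∞} (hg : Measurable g) (hfin : ∫⁻ s, g s ^ (2 / (2 - σ)) ≠ ∞) :
    ∫⁻ t, ∫⁻ s, g t * ({s | g s ≤ g t}.indicator g s * rieszKernel σ (t - s)) ≤
      ENNReal.ofReal (4 / (1 - σ)) * (∫⁻ s, g s ^ (2 / (2 - σ))) ^ (2 - σ) := by
  have hσ2 : 0 < 2 - σ := by linarith
  have : 0 < 1 - σ := by linarith
  have hp : 0 < 2 / (2 - σ) := by positivity
  rcases eq_or_ne (∫⁻ s, g s ^ (2 / (2 - σ))) 0 with h0 | h0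
  · have hg0 : ∀ᵐ t, g t = 0 := by
      filter_upwards [(lintegral_eq_zero_iff (by fun_prop)).1 h0] with t ht
      exact (ENNReal.rpow_eq_zero_iff_of_pos hp).1 ht
    refine (lintegral_congr_ae (g := 0) ?_).trans_le (by simp)
    filter_upwards [hg0] with t ht
    simp [ht]
  obtain ⟨N, hN, hgN⟩ : ∃ N : ℝ, 0 < N ∧ ∫⁻ s, g s ^ (2 / (2 - σ)) = ENNReal.ofReal N :=
    ⟨_, ENNReal.toReal_pos h0 hfin, (ENNReal.ofReal_toReal hfin).symm⟩
  have hgfin : ∀ᵐ t, g t ≠ ∞ := by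
    filter_upwards [ae_lt_top (by fun_prop) hfin] with t ht
    exact fun h ↦ ht.ne (by rw [h, ENNReal.top_rpow_of_pos hp])
  have hinner : ∀ᵐ t, ∫⁻ s, g t * ({s | g s ≤ g t}.indicator g s * rieszKernel σ (t - s)) ≤
      ENNReal.ofReal (4 / (1 - σ) * N ^ (1 - σ)) * g t ^ (2 / (2 - σ)) := by
    filter_upwards [hgfin] with t ht
    have hmeas : Measurable ({s | g s ≤ g t}.indicator g) :=
      hg.indicator (measurableSet_le hg measurable_const)
    rw [lintegral_const_mul _ (by fun_prop)]
    exact mul_lintegral_indicator_le_mul_rieszKernel_le hσ0 hσ1 hg hN ht hgN t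
  calc _ ≤ ENNReal.ofReal (4 / (1 - σ) * N ^ (1 - σ)) * ENNReal.ofReal N := by
        rw [← hgN, ← lintegral_const_mul _ (by fun_prop)]
        exact lintegral_mono_ae hinner
    _ = _ := by
        rw [hgN, ENNReal.ofReal_rpow_of_pos hN, ← ENNReal.ofReal_mul (by positivity),
          ← ENNReal.ofReal_mul (by positivity), mul_assoc, ← Real.rpow_add_one hN.ne']
        ring_nf

lemma lintegral_lintegral_mul_rieszKernel_le (hσ0 : 0 < σ) (hσ1 : σ < 1) {g : ℝ → ℝ≥0∞}
    (hg : Measurable g) :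
    ∫⁻ t, ∫⁻ s, g t * g s * rieszKernel σ (t - s) ≤
      ENNReal.ofReal (8 / (1 - σ)) * (∫⁻ s, g s ^ (2 / (2 - σ))) ^ (2 - σ) := by
  have : 0 < 1 - σ := by linarith
  rcases eq_or_ne (∫⁻ s, g s ^ (2 / (2 - σ))) ∞ with hinf | hfin
  · rw [hinf, ENNReal.top_rpow_of_pos (by linarith),
      ENNReal.mul_top (ENNReal.ofReal_pos.2 (by positivity)).ne']
    exact le_top
  set A : ℝ → ℝ → ℝ≥0∞ := fun t s ↦
    g t * ({s | g s ≤ g t}.indicator g s * rieszKernel σ (t - s)) with hA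
  have hAm : Measurable (Function.uncurry A) := by
    have : Measurable fun x : ℝ × ℝ ↦ {s | g s ≤ g x.1}.indicator g x.2 :=
      (hg.comp measurable_snd).indicator
        (measurableSet_le (hg.comp measurable_snd) (hg.comp measurable_fst))
    simp only [hA, Function.uncurry_def]
    fun_prop
  have hle (t s : ℝ) : g t * g s * rieszKernel σ (t - s) ≤ A t s + A s t := by
    rcases le_total (g s) (g t) with h | h
    · refine le_add_of_le_left (le_of_eq ?_)
      simp only [hA, Set.indicator_of_mem (show s ∈ {s | g s ≤ g t} from h), mul_assoc]
    · refine le_add_of_le_right (le_of_eq ?_)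
      simp only [hA, Set.indicator_of_mem (show t ∈ {t | g t ≤ g s} from h),
        rieszKernel_sub_comm σ s t]
      ring
  have hhalf := lintegral_lintegral_indicator_le_mul_rieszKernel_le hσ0 hσ1 hg hfin
  calc ∫⁻ t, ∫⁻ s, g t * g s * rieszKernel σ (t - s)
    _ ≤ ∫⁻ t, ∫⁻ s, (A t s + A s t) := lintegral_mono fun t ↦ lintegral_mono fun s ↦ hle t s
    _ = (∫⁻ t, ∫⁻ s, A t s) + ∫⁻ t, ∫⁻ s, A s t := by
        refine Eq.trans (lintegral_congr fun t ↦ ?_)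
          (lintegral_add_left hAm.lintegral_prod_right' _)
        exact lintegral_add_left (hAm.comp measurable_prodMk_left) _
    _ = (∫⁻ t, ∫⁻ s, A t s) + ∫⁻ t, ∫⁻ s, A t s := by
        rw [lintegral_lintegral_swap (f := fun t s ↦ A s t) (hAm.comp measurable_swap).aemeasurable]
    _ ≤ _ := add_le_add hhalf hhalf
    _ = _ := by
        rw [← add_mul, ← ENNReal.ofReal_add (by positivity) (by positivity)]
        ring_nf

end HardyLittlewoodSobolev

/-! ### The `TT*` method -/

section TTStar

variable {T Ξ : Type*} [MeasurableSpace T] [MeasurableSpace Ξ] {τ : Measure T} {ν : Measure Ξ}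

lemma lintegral_enorm_eq_enorm_integral_of_norm_eq {f : T → ℂ} (hf : Integrable f τ)
    (hnorm : ∀ t, (‖f t‖ : ℂ) = f t) : ∫⁻ t, ‖f t‖ₑ ∂τ = ‖∫ t, f t ∂τ‖ₑ := by
  have hint : ∫ t, f t ∂τ = (∫ t, ‖f t‖ ∂τ : ℝ) := by
    rw [← integral_complex_ofReal]
    exact integral_congr_ae (.of_forall fun t ↦ (hnorm t).symm)
  rw [hint, ← ofReal_norm, Complex.norm_real,
    Real.norm_of_nonneg (integral_nonneg fun t ↦ norm_nonneg _),
    ofReal_integral_norm_eq_lintegral_enorm hf]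

lemma norm_rpow_mul_conj_mul_self {p : ℝ} (hp : 0 < p) (z : ℂ) :
    ((‖z‖ ^ (p - 2) : ℝ) : ℂ) * conj z * z = (‖z‖ ^ p : ℝ) := by
  rcases eq_or_ne z 0 with rfl | hz
  · simp [Real.zero_rpow hp.ne']
  have hz' : ‖z‖ ≠ 0 := norm_ne_zero_iff.2 hz
  rw [mul_assoc, RCLike.conj_mul, Real.rpow_sub (norm_pos_iff.2 hz), Real.rpow_two,
    RCLike.ofReal_eq_complex_ofReal, ← Complex.ofReal_pow, ← Complex.ofReal_mul,
    div_mul_cancel₀ _ (pow_ne_zero 2 hz')]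

lemma norm_norm_rpow_mul_conj {p : ℝ} (hp : 1 < p) (z : ℂ) :
    ‖((‖z‖ ^ (p - 2) : ℝ) : ℂ) * conj z‖ = ‖z‖ ^ (p - 1) := by
  rcases eq_or_ne z 0 with rfl | hz
  · simp [Real.zero_rpow (show p - 1 ≠ 0 by linarith)]
  rw [norm_mul, RCLike.norm_conj, Complex.norm_real, Real.norm_of_nonneg (by positivity),
    ← Real.rpow_add_one (norm_pos_iff.2 hz).ne']
  ring_nf

lemma exists_integrable_dual_extremizer {U : T → ℂ} (hU : Measurable U) {C : ℝ}
    (hC : ∀ t, ‖U t‖ ≤ C) {S : Set T} (hS : MeasurableSet S) (hSfin : τ S ≠ ∞) {p : ℝ}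
    (hp : 1 < p) :
    ∃ w : T → ℂ, Measurable w ∧ Integrable w τ ∧
      ‖∫ t, w t * U t ∂τ‖ₑ = ∫⁻ t in S, ‖U t‖ₑ ^ p ∂τ ∧
      ∫⁻ t, ‖w t‖ₑ ^ (p / (p - 1)) ∂τ = ∫⁻ t in S, ‖U t‖ₑ ^ p ∂τ := by
  have hp0 : 0 < p := by linarith
  have hp1 : 0 < p - 1 := by linarith
  set v : T → ℂ := fun t ↦ ((‖U t‖ ^ (p - 2) : ℝ) : ℂ) * conj (U t)
  have hvnorm (t : T) : ‖v t‖ = ‖U t‖ ^ (p - 1) := norm_norm_rpow_mul_conj hp (U t)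
  have hvU (t : T) : v t * U t = (‖U t‖ ^ p : ℝ) := norm_rpow_mul_conj_mul_self hp0 (U t)
  have hv : Measurable v :=
    .mul (by fun_prop) (Complex.continuous_conj.measurable.comp hU)
  have hvle (t : T) : ‖v t‖ ≤ C ^ (p - 1) :=
    (hvnorm t).trans_le (Real.rpow_le_rpow (norm_nonneg _) (hC t) hp1.le)
  have hvi : IntegrableOn v S τ :=
    Measure.integrableOn_of_bounded hSfin hv.aestronglyMeasurable (.of_forall hvle)
  have henorm (t : T) (a : ℝ) (ha : 0 ≤ a) : ENNReal.ofReal (‖U t‖ ^ a) = ‖U t‖ₑ ^ a := by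
    rw [← ENNReal.ofReal_rpow_of_nonneg (norm_nonneg _) ha, ofReal_norm]
  refine ⟨S.indicator v, hv.indicator hS, (integrable_indicator_iff hS).2 hvi, ?_, ?_⟩
  · have hvUi : IntegrableOn (fun t ↦ v t * U t) S τ :=
      hvi.mul_bdd hU.aestronglyMeasurable (.of_forall hC)
    simp only [← Set.indicator_mul_left, integral_indicator hS]
    rw [← lintegral_enorm_eq_enorm_integral_of_norm_eq hvUi fun t ↦ ?_]
    · refine lintegral_congr fun t ↦ ?_
      rw [hvU, ← ofReal_norm, Complex.norm_real, Real.norm_of_nonneg (by positivity),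
        henorm t p hp0.le]
    · rw [hvU, Complex.norm_real, Real.norm_of_nonneg (by positivity)]
  · rw [← lintegral_indicator hS]
    refine lintegral_congr fun t ↦ ?_
    by_cases ht : t ∈ S
    · rw [Set.indicator_of_mem ht, Set.indicator_of_mem ht, ← ofReal_norm, hvnorm,
        henorm t _ hp1.le, ← ENNReal.rpow_mul, mul_div_cancel₀ _ hp1.ne']
    · simp [ht, div_pos hp0 hp1]

variable [SFinite τ] [IsFiniteMeasure ν] {e : T → Ξ → ℂ} {M : ℝ} {w : T → ℂ}

lemma lintegral_enorm_integral_mul_sq_le (he : Measurable (Function.uncurry e))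
    (hM : ∀ t ξ, ‖e t ξ‖ ≤ M) (hw : Integrable w τ) :
    ∫⁻ ξ, ‖∫ t, w t * e t ξ ∂τ‖ₑ ^ 2 ∂ν ≤
      ∫⁻ t, ∫⁻ s, ‖w t‖ₑ * ‖w s‖ₑ * ‖∫ ξ, e t ξ * conj (e s ξ) ∂ν‖ₑ ∂τ ∂τ := by
  set W : Ξ → ℂ := fun ξ ↦ ∫ t, w t * e t ξ ∂τ with hW
  set k : Ξ × T × T → ℂ := fun x ↦ e x.2.1 x.1 * conj (e x.2.2 x.1) * (w x.2.1 * conj (w x.2.2))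
  have hWW (ξ : Ξ) : W ξ * conj (W ξ) = ∫ p, k (ξ, p) ∂τ.prod τ := by
    simp only [hW, k, ← integral_conj]
    rw [← integral_prod_mul]
    congr 1 with p
    simp only [map_mul]
    ring
  have hk : Integrable k (ν.prod (τ.prod τ)) := by
    have hww : Integrable (fun x : Ξ × T × T ↦ w x.2.1 * conj (w x.2.2)) (ν.prod (τ.prod τ)) :=
      (hw.mul_prod (RCLike.conjCLE.toContinuousLinearMap.integrable_comp hw)).comp_snd ν
    refine hww.bdd_mul (c := M * M) (Measurable.aestronglyMeasurable ?_) (.of_forall fun x ↦ ?_)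
    · exact (he.comp (measurable_snd.fst.prodMk measurable_fst)).mul
        (Complex.continuous_conj.measurable.comp
          (he.comp (measurable_snd.snd.prodMk measurable_fst)))
    · rw [norm_mul, RCLike.norm_conj]
      exact mul_le_mul (hM _ _) (hM _ _) (norm_nonneg _) ((norm_nonneg _).trans (hM x.2.1 x.1))
  have hnormW (ξ : Ξ) : ‖W ξ‖ₑ ^ 2 = ‖∫ p, k (ξ, p) ∂τ.prod τ‖ₑ := by
    rw [← hWW, enorm_mul, RCLike.enorm_conj, sq]
  change ∫⁻ ξ, ‖W ξ‖ₑ ^ 2 ∂ν ≤ _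
  simp only [hnormW]
  rw [lintegral_enorm_eq_enorm_integral_of_norm_eq hk.integral_prod_left fun ξ ↦ ?_,
    integral_integral_swap hk]
  · refine (enorm_integral_le_lintegral_enorm _).trans ((lintegral_prod_le _).trans_eq ?_)
    refine lintegral_congr fun t ↦ lintegral_congr fun s ↦ ?_
    simp only [k, integral_mul_const, enorm_mul, RCLike.enorm_conj, mul_comm]
  · simp only [← hWW, RCLike.mul_conj, norm_pow, RCLike.norm_ofReal, abs_norm]
    norm_cast

lemma enorm_integral_mul_integral_sq_le (he : Measurable (Function.uncurry e))
    (hM : ∀ t ξ, ‖e t ξ‖ ≤ M) (hw : Integrable w τ) {F : Ξ → ℂ} (hF : Integrable F ν) :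
    ‖∫ t, w t * ∫ ξ, F ξ * e t ξ ∂ν ∂τ‖ₑ ^ 2 ≤
      (∫⁻ ξ, ‖F ξ‖ₑ ^ 2 ∂ν) *
        ∫⁻ t, ∫⁻ s, ‖w t‖ₑ * ‖w s‖ₑ * ‖∫ ξ, e t ξ * conj (e s ξ) ∂ν‖ₑ ∂τ ∂τ := by
  have hint : Integrable (Function.uncurry fun t ξ ↦ e t ξ * (w t * F ξ)) (τ.prod ν) :=
    (hw.mul_prod hF).bdd_mul he.aestronglyMeasurable (.of_forall fun x ↦ hM x.1 x.2)
  have hW : AEStronglyMeasurable (fun ξ ↦ ∫ t, w t * e t ξ ∂τ) ν :=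
    (hw.1.comp_snd.mul (he.comp measurable_swap).aestronglyMeasurable).integral_prod_right'
  have hfubini : ∫ t, w t * ∫ ξ, F ξ * e t ξ ∂ν ∂τ = ∫ ξ, F ξ * ∫ t, w t * e t ξ ∂τ ∂ν := by
    calc ∫ t, w t * ∫ ξ, F ξ * e t ξ ∂ν ∂τ
      _ = ∫ t, ∫ ξ, e t ξ * (w t * F ξ) ∂ν ∂τ := by
          simp only [← integral_const_mul, mul_comm, mul_left_comm]
      _ = ∫ ξ, ∫ t, e t ξ * (w t * F ξ) ∂τ ∂ν := integral_integral_swap hint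
      _ = ∫ ξ, F ξ * ∫ t, w t * e t ξ ∂τ ∂ν := by
          simp only [← integral_const_mul, mul_comm, mul_left_comm]
  have hholder := ENNReal.lintegral_mul_le_Lp_mul_Lq ν Real.HolderConjugate.two_two
    hF.1.enorm hW.enorm
  simp only [ENNReal.rpow_ofNat, Pi.mul_apply, ← enorm_mul] at hholder
  rw [hfubini]
  calc ‖∫ ξ, F ξ * ∫ t, w t * e t ξ ∂τ ∂ν‖ₑ ^ 2
    _ ≤ ((∫⁻ ξ, ‖F ξ‖ₑ ^ 2 ∂ν) ^ (1 / 2 : ℝ) *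
          (∫⁻ ξ, ‖∫ t, w t * e t ξ ∂τ‖ₑ ^ 2 ∂ν) ^ (1 / 2 : ℝ)) ^ 2 := by
        gcongr
        exact (enorm_integral_le_lintegral_enorm _).trans hholder
    _ = (∫⁻ ξ, ‖F ξ‖ₑ ^ 2 ∂ν) * ∫⁻ ξ, ‖∫ t, w t * e t ξ ∂τ‖ₑ ^ 2 ∂ν := by
        rw [mul_pow, ← ENNReal.rpow_mul_natCast, ← ENNReal.rpow_mul_natCast]
        norm_num
    _ ≤ _ := by
        gcongr
        exact lintegral_enorm_integral_mul_sq_le he hM hw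

lemma le_rpow_of_sq_le_mul_rpow {σ : ℝ} (hσ : 0 < σ) {A Y : ℝ≥0∞} (hY : Y ≠ ∞)
    (h : Y ^ 2 ≤ A * Y ^ (2 - σ)) : Y ≤ A ^ (1 / σ) := by
  rcases eq_or_ne Y 0 with rfl | h0
  · exact zero_le
  rw [one_div, ENNReal.le_rpow_inv_iff hσ]
  refine (ENNReal.mul_le_mul_iff_left (ENNReal.rpow_pos (pos_iff_ne_zero.2 h0) hY).ne'
    (ENNReal.rpow_ne_top_of_ne_zero h0 hY : Y ^ (2 - σ) ≠ ∞)).1 ?_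
  rwa [← ENNReal.rpow_add _ _ h0 hY, add_sub_cancel, ENNReal.rpow_two]

lemma measurable_integral_mul (he : Measurable (Function.uncurry e)) {F : Ξ → ℂ}
    (hF : Measurable F) : Measurable fun t ↦ ∫ ξ, F ξ * e t ξ ∂ν :=
  ((hF.comp measurable_snd).mul he).stronglyMeasurable.integral_prod_right.measurable

end TTStar

section Maximal

variable {Ξ : Type*} [MeasurableSpace Ξ] {ν : Measure Ξ} [IsFiniteMeasure ν] {σ M : ℝ} {B : ℝ≥0∞}

lemma lintegral_lintegral_enorm_mul_le {κ : ℝ → ℝ → ℂ} (hσ0 : 0 < σ) (hσ1 : σ < 1)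
    (hκ : ∀ t s, t ≠ s → ‖κ t s‖ₑ ≤ B * rieszKernel σ (t - s)) {w : ℝ → ℂ} (hw : Measurable w) :
    ∫⁻ t, ∫⁻ s, ‖w t‖ₑ * ‖w s‖ₑ * ‖κ t s‖ₑ ≤
      ENNReal.ofReal (8 / (1 - σ)) * B * (∫⁻ t, ‖w t‖ₑ ^ (2 / (2 - σ))) ^ (2 - σ) := by
  calc _ ≤ ∫⁻ t, ∫⁻ s, B * (‖w t‖ₑ * ‖w s‖ₑ * rieszKernel σ (t - s)) := by
        refine lintegral_mono fun t ↦ lintegral_mono_ae ?_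
        filter_upwards [volume.ae_ne t] with s hs
        grw [hκ t s hs.symm]
        exact le_of_eq (by ring)
    _ = B * ∫⁻ t, ∫⁻ s, ‖w t‖ₑ * ‖w s‖ₑ * rieszKernel σ (t - s) := by
        have : Measurable fun p : ℝ × ℝ ↦ ‖w p.1‖ₑ * ‖w p.2‖ₑ * rieszKernel σ (p.1 - p.2) := by
          fun_prop
        rw [← lintegral_const_mul _ this.lintegral_prod_right']
        exact lintegral_congr fun t ↦ lintegral_const_mul _ (this.comp measurable_prodMk_left)
    _ ≤ B * (ENNReal.ofReal (8 / (1 - σ)) * (∫⁻ t, ‖w t‖ₑ ^ (2 / (2 - σ))) ^ (2 - σ)) := by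
        gcongr
        exact lintegral_lintegral_mul_rieszKernel_le hσ0 hσ1 hw.enorm
    _ = _ := by rw [← mul_assoc, mul_comm B]

lemma setLIntegral_enorm_integral_rpow_le (hσ0 : 0 < σ) (hσ1 : σ < 1) {e : ℝ → Ξ → ℂ}
    (he : Measurable (Function.uncurry e)) (hM : ∀ t ξ, ‖e t ξ‖ ≤ M)
    (hB : ∀ t s, t ≠ s → ‖∫ ξ, e t ξ * conj (e s ξ) ∂ν‖ₑ ≤ B * rieszKernel σ (t - s))
    {F : Ξ → ℂ} (hFm : Measurable F) (hF : Integrable F ν) {S : Set ℝ} (hS : MeasurableSet S)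
    (hSfin : volume S ≠ ∞) :
    ∫⁻ t in S, ‖∫ ξ, F ξ * e t ξ ∂ν‖ₑ ^ (2 / σ) ≤
      (ENNReal.ofReal (8 / (1 - σ)) * B * ∫⁻ ξ, ‖F ξ‖ₑ ^ 2 ∂ν) ^ (1 / σ) := by
  have hp : 2 < 2 / σ := by rw [lt_div_iff₀ hσ0]; linarith
  set U : ℝ → ℂ := fun t ↦ ∫ ξ, F ξ * e t ξ ∂ν
  have hU : Measurable U := measurable_integral_mul he hFm
  have hUle (t : ℝ) : ‖U t‖ ≤ ∫ ξ, ‖F ξ‖ * M ∂ν :=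
    norm_integral_le_of_norm_le (hF.norm.mul_const M) (.of_forall fun ξ ↦ by
      rw [norm_mul]; gcongr; exact hM t ξ)
  obtain ⟨w, hwm, hwi, hwU, hw⟩ :=
    exists_integrable_dual_extremizer hU hUle hS hSfin (p := 2 / σ) (by linarith)
  have hexp : 2 / σ / (2 / σ - 1) = 2 / (2 - σ) := by
    have : 2 - σ ≠ 0 := by linarith
    field_simp
  rw [hexp] at hw
  refine le_rpow_of_sq_le_mul_rpow hσ0 (hwU ▸ enorm_ne_top) ?_
  calc _ = ‖∫ t, w t * U t‖ₑ ^ 2 := by rw [hwU]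
    _ ≤ _ := enorm_integral_mul_integral_sq_le he hM hwi hF
    _ ≤ _ := mul_le_mul_right (lintegral_lintegral_enorm_mul_le hσ0 hσ1 hB hwm) _
    _ = _ := by rw [hw]; ring

lemma lintegral_enorm_integral_rpow_le (hσ0 : 0 < σ) (hσ1 : σ < 1) {e : ℝ → Ξ → ℂ}
    (he : Measurable (Function.uncurry e)) (hM : ∀ t ξ, ‖e t ξ‖ ≤ M)
    (hB : ∀ t s, t ≠ s → ‖∫ ξ, e t ξ * conj (e s ξ) ∂ν‖ₑ ≤ B * rieszKernel σ (t - s))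
    {F : Ξ → ℂ} (hFm : Measurable F) (hF : Integrable F ν) :
    ∫⁻ t, ‖∫ ξ, F ξ * e t ξ ∂ν‖ₑ ^ (2 / σ) ≤
      (ENNReal.ofReal (8 / (1 - σ)) * B * ∫⁻ ξ, ‖F ξ‖ₑ ^ 2 ∂ν) ^ (1 / σ) :=
  lintegral_le_of_forall_fin_meas_le _ fun _ hS hSfin ↦
    setLIntegral_enorm_integral_rpow_le hσ0 hσ1 he hM hB hFm hF hS hSfin

lemma exists_measurable_partialSups_eq {T β : Type*} [MeasurableSpace T] [MeasurableSpace β]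
    [TopologicalSpace β] [LinearOrder β] [OrderClosedTopology β] [SecondCountableTopology β]
    [OpensMeasurableSpace β] {f : ℕ → T → β} (hf : ∀ n, Measurable (f n)) (k : ℕ) :
    ∃ N : T → ℕ, Measurable N ∧ ∀ t, partialSups (fun n ↦ f n t) k = f (N t) t := by
  induction k with
  | zero => exact ⟨fun _ ↦ 0, measurable_const, fun t ↦ partialSups_zero _⟩
  | succ k ih =>
    obtain ⟨N, hN, hfN⟩ := ih
    have hfNm : Measurable fun t ↦ f (N t) t :=
      (measurable_from_prod_countable_right (f := fun p : ℕ × T ↦ f p.1 p.2) hf).comp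
        (hN.prodMk measurable_id)
    refine ⟨fun t ↦ if f (N t) t ≤ f (k + 1) t then k + 1 else N t,
      .ite (measurableSet_le hfNm (hf _)) measurable_const hN, fun t ↦ ?_⟩
    rw [partialSups_add_one, hfN]
    rcases le_or_gt (f (N t) t) (f (k + 1) t) with h | h
    · simp [h]
    · simp [h.le, h.not_ge]

lemma lintegral_iSup_enorm_integral_rpow_le (hσ0 : 0 < σ) (hσ1 : σ < 1) {e : ℕ → ℝ → Ξ → ℂ}
    (he : ∀ n, Measurable (Function.uncurry (e n))) (hM : ∀ n t ξ, ‖e n t ξ‖ ≤ M)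
    (hB : ∀ m n t s, t ≠ s →
      ‖∫ ξ, e m t ξ * conj (e n s ξ) ∂ν‖ₑ ≤ B * rieszKernel σ (t - s))
    {F : Ξ → ℂ} (hFm : Measurable F) (hF : Integrable F ν) :
    ∫⁻ t, (⨆ n, ‖∫ ξ, F ξ * e n t ξ ∂ν‖ₑ) ^ (2 / σ) ≤
      (ENNReal.ofReal (8 / (1 - σ)) * B * ∫⁻ ξ, ‖F ξ‖ₑ ^ 2 ∂ν) ^ (1 / σ) := by
  have hσ : 0 < 2 / σ := by positivity
  set f : ℕ → ℝ → ℝ≥0∞ := fun n t ↦ ‖∫ ξ, F ξ * e n t ξ ∂ν‖ₑ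
  have hf (n : ℕ) : Measurable (f n) := (measurable_integral_mul (he n) hFm).enorm
  have hsup (t : ℝ) : (⨆ n, f n t) ^ (2 / σ) =
      ⨆ k, partialSups (fun n ↦ f n t) k ^ (2 / σ) := by
    rw [← iSup_partialSups_eq]
    exact (ENNReal.orderIsoRpow _ hσ).map_iSup _
  have hmono : Monotone fun k t ↦ partialSups (fun n ↦ f n t) k ^ (2 / σ) := fun k l hkl t ↦
    ENNReal.rpow_le_rpow ((partialSups fun n ↦ f n t).monotone hkl) hσ.le
  choose N hN hfN using exists_measurable_partialSups_eq hf
  have hNm (k : ℕ) : Measurable fun p : ℝ × Ξ ↦ e (N k p.1) p.1 p.2 :=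
    (measurable_from_prod_countable_right (f := fun p : ℕ × ℝ × Ξ ↦ e p.1 p.2.1 p.2.2) he).comp
      ((hN k).comp measurable_fst |>.prodMk measurable_id)
  change ∫⁻ t, (⨆ n, f n t) ^ (2 / σ) ≤ _
  simp only [hsup]
  rw [lintegral_iSup (fun k ↦ ?_) hmono]
  · refine iSup_le fun k ↦ ?_
    simp only [hfN, f]
    exact lintegral_enorm_integral_rpow_le hσ0 hσ1 (e := fun t ↦ e (N k t) t) (hNm k)
      (fun _ _ ↦ hM _ _ _) (fun _ _ ↦ hB _ _ _ _) hFm hF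
  · simp only [hfN]
    have := measurable_from_prod_countable_right (f := fun p : ℕ × ℝ ↦ f p.1 p.2) hf
    exact (this.comp ((hN k).prodMk measurable_id)).pow_const _

end Maximal

/-! ### Interpolation -/

lemma eLpNorm_le_eLpNorm_top_rpow_mul_eLpNorm_rpow {α E : Type*} [MeasurableSpace α]
    [NormedAddCommGroup E] {ρ : Measure α} {u : α → E}
    (hu : AEStronglyMeasurable u ρ) {p r : ℝ≥0∞} (hp0 : p ≠ 0) (hp : p ≠ ∞) (hpr : p ≤ r) :
    eLpNorm u r ρ ≤
      eLpNorm u ∞ ρ ^ (1 - p.toReal / r.toReal) * eLpNorm u p ρ ^ (p.toReal / r.toReal) := by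
  rcases eq_or_ne r ∞ with rfl | hr
  · simp
  have hp_pos : 0 < p.toReal := ENNReal.toReal_pos hp0 hp
  have hle : p.toReal ≤ r.toReal := ENNReal.toReal_mono hr hpr
  have hr_pos : 0 < r.toReal := hp_pos.trans_le hle
  have hr0 : r ≠ 0 := (ENNReal.toReal_pos_iff.1 hr_pos).1.ne'
  have hpow : ∫⁻ x, ‖u x‖ₑ ^ r.toReal ∂ρ ≤
      eLpNorm u ∞ ρ ^ (r.toReal - p.toReal) * ∫⁻ x, ‖u x‖ₑ ^ p.toReal ∂ρ := by
    rw [← lintegral_const_mul'' _ (hu.enorm.pow_const _)]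
    refine lintegral_mono_ae ?_
    filter_upwards [ae_le_eLpNormEssSup (f := u) (μ := ρ)] with x hx
    calc ‖u x‖ₑ ^ r.toReal = ‖u x‖ₑ ^ (r.toReal - p.toReal) * ‖u x‖ₑ ^ p.toReal := by
          rw [← ENNReal.rpow_add_of_nonneg _ _ (by linarith) hp_pos.le, sub_add_cancel]
      _ ≤ eLpNorm u ∞ ρ ^ (r.toReal - p.toReal) * ‖u x‖ₑ ^ p.toReal :=
          mul_le_mul_left (ENNReal.rpow_le_rpow hx (by linarith)) _
  rw [eLpNorm_eq_lintegral_rpow_enorm_toReal hr0 hr, eLpNorm_eq_lintegral_rpow_enorm_toReal hp0 hp]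
  refine (ENNReal.rpow_le_rpow hpow (by positivity)).trans_eq ?_
  rw [ENNReal.mul_rpow_of_nonneg _ _ (by positivity), ← ENNReal.rpow_mul, ← ENNReal.rpow_mul]
  congr 2 <;> field_simp

section Admissible

variable {q r : ℝ≥0∞}

lemma two_div_toReal_of_admissible (hr : 2 ≤ r) (hadm : 2 / q = 1 / 2 - 1 / r) :
    2 / q.toReal = 1 / 2 - 1 / r.toReal := by
  have h := congrArg ENNReal.toReal hadm
  rw [ENNReal.toReal_sub_of_le (by simpa only [one_div] using ENNReal.inv_le_inv.2 hr)
    (by norm_num)] at h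
  simpa using h

lemma eq_two_of_admissible_top (hr : 2 ≤ r) (hadm : 2 / ∞ = 1 / 2 - 1 / r) : r = 2 := by
  rw [ENNReal.div_top, eq_comm, tsub_eq_zero_iff_le, one_div, one_div, ENNReal.inv_le_inv] at hadm
  exact hadm.antisymm hr

lemma ne_zero_of_admissible (hadm : 2 / q = 1 / 2 - 1 / r) : q ≠ 0 := by
  rintro rfl
  rw [ENNReal.div_zero two_ne_zero] at hadm
  exact ENNReal.sub_ne_top (by norm_num) hadm.symm

variable {α E : Type*} [MeasurableSpace α] [NormedAddCommGroup E] {ρ : Measure α}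

lemma eLpNorm_rpow_le_of_admissible {u : α → E} (hu : AEStronglyMeasurable u ρ) (hq : q ≠ ∞)
    (hr : 2 ≤ r) (hadm : 2 / q = 1 / 2 - 1 / r) :
    eLpNorm u r ρ ^ q.toReal ≤ eLpNorm u ∞ ρ ^ 4 * eLpNorm u 2 ρ ^ (2 / r.toReal * q.toReal) := by
  have hQ : 0 < q.toReal := ENNReal.toReal_pos (ne_zero_of_admissible hadm) hq
  have hexp : 1 - 2 / r.toReal = 4 / q.toReal := by
    linear_combination -2 * two_div_toReal_of_admissible hr hadm
  have hinterp := eLpNorm_le_eLpNorm_top_rpow_mul_eLpNorm_rpow hu two_ne_zero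
    ENNReal.ofNat_ne_top hr
  rw [ENNReal.toReal_ofNat, hexp] at hinterp
  refine (ENNReal.rpow_le_rpow hinterp hQ.le).trans_eq ?_
  rw [ENNReal.mul_rpow_of_nonneg _ _ hQ.le, ← ENNReal.rpow_mul, ← ENNReal.rpow_mul,
    div_mul_cancel₀ _ hQ.ne', ENNReal.rpow_ofNat]

lemma timeNorm_eLpNorm_le_of_admissible {v : ℝ → α → E} (hv : ∀ t, AEStronglyMeasurable (v t) ρ)
    (hr : 2 ≤ r) (hadm : 2 / q = 1 / 2 - 1 / r) {D N : ℝ≥0∞} (hN : N ≠ ∞)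
    (h2 : ∀ t, eLpNorm (v t) 2 ρ ≤ N) (h4 : ∫⁻ t, eLpNorm (v t) ∞ ρ ^ 4 ≤ (D * N ^ 2) ^ 2) :
    timeNorm q (fun t ↦ eLpNorm (v t) r ρ) ≤ D ^ (1 / 2 - 1 / r.toReal) * N := by
  rcases eq_or_ne q ∞ with rfl | hq
  · obtain rfl := eq_two_of_admissible_top hr hadm
    simpa [timeNorm] using essSup_le_of_ae_le N (.of_forall h2)
  have hqr := two_div_toReal_of_admissible hr hadm
  have hQ : 0 < q.toReal := ENNReal.toReal_pos (ne_zero_of_admissible hadm) hq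
  have hpow (t : ℝ) : eLpNorm (v t) r ρ ^ q.toReal ≤
      eLpNorm (v t) ∞ ρ ^ 4 * N ^ (2 / r.toReal * q.toReal) :=
    (eLpNorm_rpow_le_of_admissible (hv t) hq hr hadm).trans (by gcongr; exact h2 t)
  rw [timeNorm, if_neg hq]
  calc (∫⁻ t, eLpNorm (v t) r ρ ^ q.toReal) ^ (1 / q.toReal)
      ≤ ((D * N ^ 2) ^ 2 * N ^ (2 / r.toReal * q.toReal)) ^ (1 / q.toReal) := by
        gcongr
        refine (lintegral_mono hpow).trans ?_
        rw [lintegral_mul_const' _ _ (ENNReal.rpow_ne_top_of_nonneg (by positivity) hN)]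
        gcongr
    _ = D ^ (2 / q.toReal) * (N ^ (4 / q.toReal) * N ^ (2 / r.toReal)) := by
        rw [← ENNReal.rpow_ofNat, ← ENNReal.rpow_ofNat]
        simp only [ENNReal.mul_rpow_of_nonneg, hQ.le, one_div_nonneg, zero_le_two,
          ← ENNReal.rpow_mul, mul_assoc, mul_one_div_cancel hQ.ne', mul_one]
        ring_nf
    _ = D ^ (1 / 2 - 1 / r.toReal) * N := by
        rw [← ENNReal.rpow_add_of_nonneg _ _ (by positivity) (by positivity), hqr,
          show 4 / q.toReal + 2 / r.toReal = 1 by linear_combination 2 * hqr, ENNReal.rpow_one]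

end Admissible

/-! ### The symbol `m₁` -/

section Symbol

open Set

variable {x μ lam ξ : ℝ}

lemma hasDerivAt_tanh (x : ℝ) : HasDerivAt Real.tanh (1 - Real.tanh x ^ 2) x := by
  have hcosh := (Real.cosh_pos x).ne'
  rw [show Real.tanh = Real.sinh / Real.cosh from funext Real.tanh_eq_sinh_div_cosh]
  refine ((Real.hasDerivAt_sinh x).div (Real.hasDerivAt_cosh x) hcosh).congr_deriv ?_
  rw [Pi.div_apply]
  field_simp

lemma contDiff_tanh {n : WithTop ℕ∞} : ContDiff ℝ n Real.tanh := by
  rw [show Real.tanh = fun x ↦ Real.sinh x / Real.cosh x from funext Real.tanh_eq_sinh_div_cosh]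
  exact Real.contDiff_sinh.div Real.contDiff_cosh fun x ↦ (Real.cosh_pos x).ne'

lemma tanh_pos (hx : 0 < x) : 0 < Real.tanh x := by
  rw [Real.tanh_eq_sinh_div_cosh]
  exact div_pos (Real.sinh_pos_iff.2 hx) (Real.cosh_pos x)

lemma tanh_le_self (hx : 0 ≤ x) : Real.tanh x ≤ x := by
  have hanti : MonotoneOn (fun x ↦ x - Real.tanh x) (Ici 0) :=
    monotoneOn_of_hasDerivWithinAt_nonneg (convex_Ici 0)
      (continuous_id.sub (contDiff_tanh (n := 0)).continuous).continuousOn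
      (fun y _ ↦ ((hasDerivAt_id y).sub (hasDerivAt_tanh y)).hasDerivWithinAt)
      fun y _ ↦ by rw [sub_sub_cancel]; positivity
  simpa using hanti self_mem_Ici hx hx

lemma jap_eq_sqrt (x : ℝ) : jap x = √(1 + x ^ 2) := (Real.sqrt_eq_rpow _).symm

lemma jap_pos (x : ℝ) : 0 < jap x := by
  rw [jap_eq_sqrt]
  positivity

lemma jap_sq (x : ℝ) : jap x ^ 2 = 1 + x ^ 2 := by
  rw [jap_eq_sqrt, Real.sq_sqrt (by positivity)]

lemma div_jap_le_tanh (hx : 0 ≤ x) : x / jap x ≤ Real.tanh x := by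
  have hs : x ≤ Real.sinh x := Real.self_le_sinh_iff.2 hx
  have : 0 ≤ Real.sinh x := hx.trans hs
  have hj := jap_pos x
  have hc := Real.cosh_pos x
  rw [Real.tanh_eq_sinh_div_cosh, div_le_div_iff₀ hj hc]
  refine (sq_le_sq₀ (by positivity) (by positivity)).1 ?_
  rw [mul_pow, mul_pow, jap_sq, Real.cosh_sq']
  nlinarith

/-- The derivative of `m₁` on the positive half-line. -/
def m1Deriv (x : ℝ) : ℝ :=
  (Real.tanh x + x * (1 - Real.tanh x ^ 2)) / (2 * √(x * Real.tanh x))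

/-- The second derivative of `m₁` on the positive half-line, written as minus a quotient of
nonnegative quantities. -/
def m1Deriv2 (x : ℝ) : ℝ :=
  -(((Real.tanh x - x * (1 - Real.tanh x ^ 2)) ^ 2 +
    4 * x ^ 2 * Real.tanh x ^ 2 * (1 - Real.tanh x ^ 2)) /
      (4 * (x * Real.tanh x) * √(x * Real.tanh x)))

lemma m1_neg (x : ℝ) : m1 (-x) = -m1 x := by
  simp only [m1, neg_eq_zero, abs_neg]
  split_ifs <;> simp

lemma m1_eq_sqrt_of_pos (hx : 0 < x) : m1 x = √(x * Real.tanh x) := by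
  rw [m1, if_neg hx.ne', abs_of_pos hx]
  nth_rewrite 1 [← Real.sqrt_sq hx.le]
  rw [← Real.sqrt_mul (by positivity)]
  congr 1
  field_simp

lemma measurable_m1 : Measurable m1 := by
  have htanh := (contDiff_tanh (n := 0)).continuous.measurable
  exact Measurable.ite (measurableSet_singleton 0) measurable_const (by fun_prop)

lemma contDiffAt_m1 {n : ℕ∞} (hx : x ≠ 0) : ContDiffAt ℝ n m1 x := by
  have habs : ContDiffAt ℝ n (fun y : ℝ ↦ |y|) x := contDiffAt_abs hx
  have hpos : 0 < |x| := abs_pos.2 hx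
  have hquot : ContDiffAt ℝ n (fun y : ℝ ↦ y * √(Real.tanh |y| / |y|)) x :=
    contDiffAt_id.mul (((contDiff_tanh.contDiffAt.comp x habs).div habs hpos.ne').sqrt
      (div_pos (tanh_pos hpos) hpos).ne')
  refine hquot.congr_of_eventuallyEq ?_
  filter_upwards [isOpen_ne.mem_nhds hx] with y hy
  rw [m1, if_neg hy]

lemma hasDerivAt_sqrt_mul_tanh (hx : 0 < x) :
    HasDerivAt (fun y ↦ √(y * Real.tanh y)) (m1Deriv x) x := by
  have hne : x * Real.tanh x ≠ 0 := (mul_pos hx (tanh_pos hx)).ne'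
  exact (((hasDerivAt_id x).mul (hasDerivAt_tanh x)).sqrt hne).congr_deriv (by simp [m1Deriv])

lemma hasDerivAt_m1 (hx : 0 < x) : HasDerivAt m1 (m1Deriv x) x := by
  refine (hasDerivAt_sqrt_mul_tanh hx).congr_of_eventuallyEq ?_
  filter_upwards [lt_mem_nhds hx] with y hy using m1_eq_sqrt_of_pos hy

lemma hasDerivAt_m1Deriv (hx : 0 < x) : HasDerivAt m1Deriv (m1Deriv2 x) x := by
  have hxT : 0 < x * Real.tanh x := mul_pos hx (tanh_pos hx)
  have hnum : HasDerivAt (fun y ↦ Real.tanh y + y * (1 - Real.tanh y ^ 2))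
      (2 * (1 - Real.tanh x ^ 2) * (1 - x * Real.tanh x)) x := by
    refine ((hasDerivAt_tanh x).add ((hasDerivAt_id x).mul
      (((hasDerivAt_tanh x).pow 2).const_sub 1))).congr_deriv ?_
    simp only [id_eq, Pi.pow_apply, Nat.cast_ofNat, Nat.add_one_sub_one, pow_one]
    ring
  refine (hnum.div ((hasDerivAt_sqrt_mul_tanh hx).const_mul 2) (by positivity)).congr_deriv ?_
  have hsq : √(x * Real.tanh x) ^ 2 = x * Real.tanh x := Real.sq_sqrt hxT.le
  have hs : 0 < √(x * Real.tanh x) := Real.sqrt_pos.2 hxT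
  have hquot (a b s : ℝ) (hs : 0 < s) : (a * (2 * s) - b * (2 * (b / (2 * s)))) / (2 * s) ^ 2 =
      -((b ^ 2 - 2 * a * s ^ 2) / (4 * s ^ 2 * s)) := by
    field_simp
    ring
  rw [m1Deriv, m1Deriv2, hquot _ _ _ hs, hsq]
  congr 2
  ring

lemma continuousOn_m1Deriv2 : ContinuousOn m1Deriv2 (Ioi 0) := by
  have htanh := (contDiff_tanh (n := 0)).continuous
  refine (ContinuousOn.div (by fun_prop) (by fun_prop) fun x hx ↦ ?_).neg
  have : 0 < x * Real.tanh x := mul_pos hx (tanh_pos hx)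
  positivity

lemma pow_four_div_four_le {T : ℝ} (hT : 0 ≤ T) (hT1 : T ^ 2 ≤ 1) (hTx : T ≤ x) :
    T ^ 4 / 4 ≤ (T - x * (1 - T ^ 2)) ^ 2 + 4 * x ^ 2 * T ^ 2 * (1 - T ^ 2) := by
  have hx : 0 ≤ x := hT.trans hTx
  have : 0 ≤ 1 - T ^ 2 := by linarith
  rcases le_total (x * (1 - T ^ 2)) (T / 2) with h | h
  · have hfirst : (T / 2) ^ 2 ≤ (T - x * (1 - T ^ 2)) ^ 2 :=
      pow_le_pow_left₀ (by positivity) (by linarith) 2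
    have hsecond : 0 ≤ 4 * x ^ 2 * T ^ 2 * (1 - T ^ 2) := by positivity
    have hT4 : T ^ 4 ≤ T ^ 2 := by nlinarith [sq_nonneg T]
    linarith
  · have hsecond : 4 * x * T ^ 2 * (T / 2) ≤ 4 * x * T ^ 2 * (x * (1 - T ^ 2)) := by gcongr
    have hT4 : T ^ 3 * T ≤ T ^ 3 * x := by gcongr
    nlinarith [sq_nonneg (T - x * (1 - T ^ 2)), pow_nonneg hT 4]

lemma m1Deriv2_le (hx : 0 < x) : m1Deriv2 x ≤ -(x * jap x ^ (-(5 / 2) : ℝ) / 16) := by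
  have hT := tanh_pos hx
  have hTx := tanh_le_self hx.le
  have hnum := pow_four_div_four_le hT.le (Real.tanh_sq_lt_one x).le hTx
  have hTl := div_jap_le_tanh hx.le
  have hxT : 0 < x * Real.tanh x := mul_pos hx hT
  have hj := jap_pos x
  have hjpow : jap x ^ (-(5 / 2) : ℝ) = 1 / jap x ^ 2 * √(1 / jap x) := by
    rw [Real.sqrt_eq_rpow, one_div, one_div, ← Real.rpow_natCast, ← Real.rpow_neg hj.le,
      Real.inv_rpow hj.le, ← Real.rpow_neg hj.le, ← Real.rpow_add hj]
    norm_num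
  rw [m1Deriv2, neg_le_neg_iff, le_div_iff₀ (by positivity)]
  refine le_trans ?_ hnum
  set T := Real.tanh x
  have hsqrt : √(1 / jap x) * √(x * T) ≤ T := by
    rw [← Real.sqrt_mul (by positivity)]
    refine Real.sqrt_le_iff.2 ⟨hT.le, ?_⟩
    calc 1 / jap x * (x * T) = x / jap x * T := by ring
      _ ≤ T ^ 2 := by rw [sq]; gcongr
  calc x * jap x ^ (-(5 / 2) : ℝ) / 16 * (4 * (x * T) * √(x * T))
    _ = 1 / 4 * T * ((x / jap x) ^ 2 * (√(1 / jap x) * √(x * T))) := by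
        rw [hjpow]
        field_simp
        norm_num
    _ ≤ 1 / 4 * T * (T ^ 2 * T) := by gcongr
    _ = T ^ 4 / 4 := by ring

/-- The phase `φ_μ(ξ) = m₁(√μ ξ) / √μ`, so that `S_{μ,1}(t)` has symbol `e^{i t φ_μ(ξ)}`. -/
def phase (μ ξ : ℝ) : ℝ := m1 (√μ * ξ) / √μ

lemma phase_neg (μ ξ : ℝ) : phase μ (-ξ) = -phase μ ξ := by
  simp only [phase, mul_neg, m1_neg, neg_div]

@[fun_prop]
lemma measurable_phase (μ : ℝ) : Measurable (phase μ) :=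
  (measurable_m1.comp (measurable_const_mul _)).div_const _

lemma contDiffAt_phase {n : ℕ∞} (hμ : 0 < μ) (hξ : ξ ≠ 0) : ContDiffAt ℝ n (phase μ) ξ :=
  ((contDiffAt_m1 (mul_ne_zero (Real.sqrt_pos.2 hμ).ne' hξ)).comp ξ
    (contDiffAt_const.mul contDiffAt_id)).div_const _

lemma hasDerivAt_phase (hμ : 0 < μ) (hξ : 0 < ξ) :
    HasDerivAt (phase μ) (m1Deriv (√μ * ξ)) ξ := by
  have hs : 0 < √μ := Real.sqrt_pos.2 hμ
  refine (((hasDerivAt_m1 (mul_pos hs hξ)).comp ξ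
    ((hasDerivAt_id ξ).const_mul (√μ))).div_const (√μ)).congr_deriv ?_
  field_simp

lemma hasDerivAt_m1Deriv_sqrt_mul (hμ : 0 < μ) (hξ : 0 < ξ) :
    HasDerivAt (fun ξ ↦ m1Deriv (√μ * ξ)) (√μ * m1Deriv2 (√μ * ξ)) ξ := by
  have hs : 0 < √μ := Real.sqrt_pos.2 hμ
  refine ((hasDerivAt_m1Deriv (mul_pos hs hξ)).comp ξ
    ((hasDerivAt_id ξ).const_mul (√μ))).congr_deriv ?_
  ring

/-- The factor `μ^{-1/2} λ^{-1/2} ⟨√μ λ⟩^{5/4}` of the dispersive estimate at frequency `λ`; up to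
a constant it is `|φ_μ''|^{-1/2}` on the annulus `|ξ| ∼ λ`. -/
def dispersiveFactor (μ lam : ℝ) : ℝ :=
  μ ^ (-(1 : ℝ) / 2) * lam ^ (-(1 : ℝ) / 2) * jap (√μ * lam) ^ ((5 : ℝ) / 4)

lemma dispersiveFactor_pos (hμ : 0 < μ) (hlam : 0 < lam) : 0 < dispersiveFactor μ lam := by
  have := jap_pos (√μ * lam)
  unfold dispersiveFactor
  positivity

lemma one_div_dispersiveFactor_sq (hμ : 0 < μ) (hlam : 0 < lam) :
    1 / dispersiveFactor μ lam ^ 2 = μ * lam * jap (√μ * lam) ^ (-(5 / 2) : ℝ) := by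
  have hj := jap_pos (√μ * lam)
  rw [dispersiveFactor, mul_pow, mul_pow, ← Real.rpow_mul_natCast hμ.le,
    ← Real.rpow_mul_natCast hlam.le, ← Real.rpow_mul_natCast hj.le, Real.rpow_neg hj.le]
  norm_num [Real.rpow_neg_one]
  ring

lemma jap_two_mul_le (x : ℝ) : jap (2 * x) ≤ 2 * jap x := by
  refine (sq_le_sq₀ (jap_pos _).le (by have := jap_pos x; positivity)).1 ?_
  rw [mul_pow, jap_sq, jap_sq]
  linarith

lemma jap_le_jap {y : ℝ} (hx : 0 ≤ x) (hxy : x ≤ y) : jap x ≤ jap y := by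
  rw [jap_eq_sqrt, jap_eq_sqrt]
  gcongr

lemma one_div_sixteen_mul_dispersiveFactor_sq_le (hμ : 0 < μ) (hlam : 0 < lam)
    (hξ : ξ ∈ Icc (lam / 2) (2 * lam)) :
    1 / (16 * dispersiveFactor μ lam) ^ 2 ≤ -(√μ * m1Deriv2 (√μ * ξ)) := by
  have hs : 0 < √μ := Real.sqrt_pos.2 hμ
  have hξ0 : 0 < ξ := by linarith [hξ.1]
  have hj := jap_pos (√μ * lam)
  have hjξ := jap_pos (√μ * ξ)
  have hjle : jap (√μ * ξ) ≤ 2 * jap (√μ * lam) :=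
    (jap_le_jap (by positivity) (by nlinarith [hξ.2])).trans (jap_two_mul_le _)
  have htwo : (1 / 8 : ℝ) ≤ 2 ^ (-(5 / 2) : ℝ) :=
    calc (1 / 8 : ℝ) = 2 ^ (-3 : ℝ) := by norm_num [Real.rpow_neg]
      _ ≤ 2 ^ (-(5 / 2) : ℝ) := Real.rpow_le_rpow_of_exponent_le one_le_two (by norm_num)
  have hpow : 1 / 8 * jap (√μ * lam) ^ (-(5 / 2) : ℝ) ≤ jap (√μ * ξ) ^ (-(5 / 2) : ℝ) :=
    calc _ ≤ 2 ^ (-(5 / 2) : ℝ) * jap (√μ * lam) ^ (-(5 / 2) : ℝ) := by gcongr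
      _ = (2 * jap (√μ * lam)) ^ (-(5 / 2) : ℝ) := (Real.mul_rpow zero_le_two hj.le).symm
      _ ≤ _ := Real.rpow_le_rpow_of_nonpos hjξ hjle (by norm_num)
  calc 1 / (16 * dispersiveFactor μ lam) ^ 2
    _ = √μ * (√μ * (lam / 2) * (1 / 8 * jap (√μ * lam) ^ (-(5 / 2) : ℝ)) / 16) := by
        rw [mul_pow, ← one_div_mul_one_div, one_div_dispersiveFactor_sq hμ hlam]
        nth_rewrite 1 [← Real.mul_self_sqrt hμ.le]
        ring
    _ ≤ √μ * (√μ * ξ * jap (√μ * ξ) ^ (-(5 / 2) : ℝ) / 16) := by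
        gcongr
        exact hξ.1
    _ ≤ -(√μ * m1Deriv2 (√μ * ξ)) := by
        rw [← mul_neg]
        gcongr
        exact le_neg.1 (m1Deriv2_le (mul_pos hs hξ0))

end Symbol

/-! ### The dispersive estimate -/

section Dispersive

open Set

variable {μ lam t : ℝ}

lemma norm_intervalIntegral_exp_phase_le_of_neg (hμ : 0 < μ) (hlam : 0 < lam) (ht : t < 0)
    (y : ℝ) :
    ‖∫ ξ in (lam / 2)..(2 * lam), Complex.exp (Complex.I * (y * ξ + t * phase μ ξ : ℝ))‖ ≤
      160 * dispersiveFactor μ lam * |t| ^ (-(1 / 2) : ℝ) := by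
  have hA := dispersiveFactor_pos hμ hlam
  have ht' : 0 < |t| := abs_pos.2 ht.ne
  have hpos {ξ : ℝ} (hξ : ξ ∈ Icc (lam / 2) (2 * lam)) : 0 < ξ := by linarith [hξ.1]
  have hvdc :
      ‖∫ ξ in (lam / 2)..(2 * lam), Complex.exp (Complex.I * (y * ξ + t * phase μ ξ : ℝ))‖ ≤
      10 / √(|t| * (1 / (16 * dispersiveFactor μ lam) ^ 2)) := by
    refine norm_integral_exp_I_mul_le_of_le_deriv_deriv
      (ψ' := fun ξ ↦ y + t * m1Deriv (√μ * ξ)) (ψ'' := fun ξ ↦ t * (√μ * m1Deriv2 (√μ * ξ)))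
      (by linarith) (by positivity) (fun ξ hξ ↦ ?_) (fun ξ hξ ↦ ?_) ?_ fun ξ hξ ↦ ?_
    · exact (((hasDerivAt_id ξ).const_mul y).add
        ((hasDerivAt_phase hμ (hpos hξ)).const_mul t)).congr_deriv (by rw [mul_one])
    · exact ((hasDerivAt_m1Deriv_sqrt_mul hμ (hpos hξ)).const_mul t).const_add y
    · have hcont : ContinuousOn (fun ξ ↦ m1Deriv2 (√μ * ξ)) (Icc (lam / 2) (2 * lam)) :=
        continuousOn_m1Deriv2.comp (by fun_prop) fun ξ hξ ↦
          mul_pos (Real.sqrt_pos.2 hμ) (hpos hξ)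
      fun_prop
    · rw [abs_of_neg ht, neg_mul_comm]
      exact mul_le_mul_of_nonpos_left
        (le_neg.1 (one_div_sixteen_mul_dispersiveFactor_sq_le hμ hlam hξ)) ht.le
  refine hvdc.trans_eq ?_
  rw [Real.sqrt_mul ht'.le, Real.sqrt_div zero_le_one, Real.sqrt_sq (by positivity), Real.sqrt_one,
    Real.rpow_neg ht'.le, ← Real.sqrt_eq_rpow]
  field_simp
  norm_num

lemma conj_exp_I_mul (θ : ℝ) :
    conj (Complex.exp (Complex.I * θ)) = Complex.exp (Complex.I * (-θ : ℝ)) := by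
  rw [← Complex.exp_conj, map_mul, Complex.conj_I, Complex.conj_ofReal, Complex.ofReal_neg,
    neg_mul_comm]

lemma norm_intervalIntegral_exp_phase_le (hμ : 0 < μ) (hlam : 0 < lam) (ht : t ≠ 0) (y : ℝ) :
    ‖∫ ξ in (lam / 2)..(2 * lam), Complex.exp (Complex.I * (y * ξ + t * phase μ ξ : ℝ))‖ ≤
      160 * dispersiveFactor μ lam * |t| ^ (-(1 / 2) : ℝ) := by
  rcases lt_or_gt_of_ne ht with h | h
  · exact norm_intervalIntegral_exp_phase_le_of_neg hμ hlam h y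
  · have hneg := norm_intervalIntegral_exp_phase_le_of_neg hμ hlam (neg_neg_of_pos h) (-y)
    rw [abs_neg] at hneg
    refine le_of_eq_of_le ?_ hneg
    rw [← RCLike.norm_conj, intervalIntegral.integral_of_le (by linarith),
      intervalIntegral.integral_of_le (by linarith), ← integral_conj]
    simp only [conj_exp_I_mul]
    ring_nf

/-- The annulus `λ/2 < |ξ| ≤ 2λ`, which carries the frequencies selected by `P_λ`. -/
def annulus (lam : ℝ) : Set ℝ := {ξ | |ξ| ∈ Ioc (lam / 2) (2 * lam)}

lemma volume_annulus_lt_top (lam : ℝ) : volume (annulus lam) < ∞ := by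
  have hsub : annulus lam ⊆ Icc (-(2 * lam)) (2 * lam) := fun ξ hξ ↦ abs_le.1 hξ.2
  exact (measure_mono hsub).trans_lt measure_Icc_lt_top

instance (lam : ℝ) : IsFiniteMeasure (volume.restrict (annulus lam)) :=
  isFiniteMeasure_restrict.2 (volume_annulus_lt_top lam).ne

lemma setIntegral_abs_mem_Ioc {E : Type*} [NormedAddCommGroup E] [NormedSpace ℝ E] {a b : ℝ}
    (ha : 0 ≤ a) (hab : a ≤ b) {f : ℝ → E} (hf : IntegrableOn f {x | |x| ∈ Ioc a b}) :
    ∫ x in {x | |x| ∈ Ioc a b}, f x = (∫ x in a..b, f x) + ∫ x in a..b, f (-x) := by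
  have hset : {x : ℝ | |x| ∈ Ioc a b} = Ioc a b ∪ Ico (-b) (-a) := by
    ext x
    rcases abs_cases x with ⟨h, h'⟩ | ⟨h, h'⟩ <;>
      simp only [mem_ofPred_eq, mem_Ioc, mem_union, mem_Ico, h] <;> grind
  have hdisj : Disjoint (Ioc a b) (Ico (-b) (-a)) :=
    disjoint_left.2 fun x hx hx' ↦ by linarith [hx.1, hx'.2]
  rw [hset] at hf ⊢
  rw [setIntegral_union hdisj measurableSet_Ico hf.left_of_union hf.right_of_union,
    integral_Ico_eq_integral_Ioc, ← intervalIntegral.integral_of_le hab,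
    ← intervalIntegral.integral_of_le (neg_le_neg hab), intervalIntegral.integral_comp_neg]

lemma norm_setIntegral_annulus_exp_phase_le (hμ : 0 < μ) (hlam : 0 < lam) (ht : t ≠ 0) (y : ℝ) :
    ‖∫ ξ in annulus lam, Complex.exp (Complex.I * (y * ξ + t * phase μ ξ : ℝ))‖ ≤
      320 * dispersiveFactor μ lam * |t| ^ (-(1 / 2) : ℝ) := by
  have hint : IntegrableOn (fun ξ ↦ Complex.exp (Complex.I * (y * ξ + t * phase μ ξ : ℝ)))
      (annulus lam) :=
    Integrable.of_bound (C := 1) (Measurable.aestronglyMeasurable (by fun_prop))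
      (.of_forall fun ξ ↦ (Complex.norm_exp_I_mul_ofReal _).le)
  have hneg : ∀ ξ : ℝ, y * -ξ + t * phase μ (-ξ) = -y * ξ + -t * phase μ ξ := fun ξ ↦ by
    rw [phase_neg]
    ring
  have h₁ := norm_intervalIntegral_exp_phase_le hμ hlam ht y
  have h₂ := norm_intervalIntegral_exp_phase_le hμ hlam (neg_ne_zero.2 ht) (-y)
  rw [abs_neg] at h₂
  rw [annulus, setIntegral_abs_mem_Ioc (by positivity) (by linarith) hint]
  simp only [hneg]
  exact (norm_add_le_of_le h₁ h₂).trans_eq (by ring)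

end Dispersive

/-! ### Frequency-localized waves -/

section Wave

open Set

variable {χ : ℝ → ℝ} {μ lam : ℝ} {g : 𝓢(ℝ, ℂ)}

/-- The Littlewood–Paley cutoff `β_λ(|ξ|)`, the Fourier symbol of `P_λ`. -/
def lpCutoff (χ : ℝ → ℝ) (lam ξ : ℝ) : ℝ := χ (|ξ| / lam) - χ (2 * |ξ| / lam)

lemma support_lpCutoff_subset (hsupp : Function.support χ ⊆ Ioo (-2) 2)
    (hone : ∀ s ∈ Icc (-1 : ℝ) 1, χ s = 1) (hlam : 0 < lam) :
    Function.support (lpCutoff χ lam) ⊆ annulus lam := by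
  have hzero {s : ℝ} (hs : 2 ≤ s) : χ s = 0 :=
    Function.notMem_support.1 fun h ↦ (hsupp h).2.not_ge hs
  have hone' {s : ℝ} (hs0 : 0 ≤ s) (hs : s ≤ 1) : χ s = 1 := hone s ⟨by linarith, hs⟩
  refine Function.support_subset_iff'.2 fun ξ hξ ↦ ?_
  rw [lpCutoff]
  rcases not_and_or.1 hξ with h | h
  · rw [not_lt, le_div_iff₀ two_pos, mul_comm] at h
    rw [hone' (by positivity) ((div_le_one hlam).2 (by linarith [abs_nonneg ξ])),
      hone' (by positivity) ((div_le_one hlam).2 h), sub_self]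
  · rw [not_le] at h
    rw [hzero ((le_div_iff₀ hlam).2 h.le),
      hzero ((le_div_iff₀ hlam).2 (by linarith [abs_nonneg ξ])), sub_self]

lemma contDiffAt_lpCutoff (hχ : ContDiff ℝ (⊤ : ℕ∞) χ) {ξ : ℝ} (hξ : ξ ≠ 0) :
    ContDiffAt ℝ (⊤ : ℕ∞) (lpCutoff χ lam) ξ := by
  have habs : ContDiffAt ℝ (⊤ : ℕ∞) (fun x : ℝ ↦ |x|) ξ := contDiffAt_abs hξ
  exact (hχ.contDiffAt.comp ξ (habs.div_const lam)).sub
    (hχ.contDiffAt.comp ξ ((contDiffAt_const.mul habs).div_const lam))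

lemma exists_schwartzMap_coe_eq_of_support_subset_annulus {G : ℝ → ℂ} (hlam : 0 < lam)
    (hsupp : Function.support G ⊆ annulus lam)
    (hsmooth : ∀ ξ ≠ 0, ContDiffAt ℝ (⊤ : ℕ∞) G ξ) : ∃ g : 𝓢(ℝ, ℂ), ⇑g = G := by
  rw [Function.support_subset_iff'] at hsupp
  have hcompact : HasCompactSupport G :=
    .intro (isCompact_Icc (a := -(2 * lam)) (b := 2 * lam)) fun ξ hξ ↦
      hsupp ξ fun h ↦ hξ (abs_le.1 h.2)
  refine ⟨hcompact.toSchwartzMap (contDiff_iff_contDiffAt.2 fun ξ ↦ ?_), rfl⟩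
  rcases eq_or_ne ξ 0 with rfl | hξ
  · refine (contDiffAt_const (c := (0 : ℂ))).congr_of_eventuallyEq ?_
    filter_upwards [Metric.ball_mem_nhds (0 : ℝ) (half_pos hlam)] with ξ hξ
    exact hsupp ξ fun h ↦ h.1.not_gt (by simpa using hξ)
  · exact hsmooth ξ hξ

lemma exists_proj1_eq_fourierInv (hχ : ContDiff ℝ (⊤ : ℕ∞) χ)
    (hsupp : Function.support χ ⊆ Ioo (-2) 2) (hone : ∀ s ∈ Icc (-1 : ℝ) 1, χ s = 1)
    (hlam : 0 < lam) (f : 𝓢(ℝ, ℂ)) :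
    ∃ g : 𝓢(ℝ, ℂ), Function.support g ⊆ annulus lam ∧ proj1 χ lam f = (𝓕⁻ g : 𝓢(ℝ, ℂ)) := by
  have hG : Function.support (fun ξ ↦ (lpCutoff χ lam ξ : ℂ) * 𝓕 f ξ) ⊆ annulus lam :=
    (Function.support_mul_subset_left _ _).trans
      ((Function.support_comp_subset Complex.ofReal_zero _).trans
        (support_lpCutoff_subset hsupp hone hlam))
  obtain ⟨g, hg⟩ := exists_schwartzMap_coe_eq_of_support_subset_annulus hlam hG fun ξ hξ ↦
    (Complex.ofRealCLM.contDiff.contDiffAt.comp ξ (contDiffAt_lpCutoff hχ hξ)).mul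
      ((𝓕 f).smooth ⊤).contDiffAt
  refine ⟨g, hg ▸ hG, ?_⟩
  rw [SchwartzMap.fourierInv_coe, hg, SchwartzMap.fourier_coe]
  rfl

lemma exists_prop1_fourierInv_eq (hμ : 0 < μ) (hlam : 0 < lam)
    (hg : Function.support g ⊆ annulus lam) (t : ℝ) :
    ∃ k : 𝓢(ℝ, ℂ), (∀ ξ, k ξ = Complex.exp (Complex.I * (t * phase μ ξ : ℝ)) * g ξ) ∧
      prop1 μ t (𝓕⁻ g : 𝓢(ℝ, ℂ)) = (𝓕⁻ k : 𝓢(ℝ, ℂ)) := by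
  have hphase (ξ : ℝ) : t / √μ * m1 (√μ * ξ) = t * phase μ ξ := by
    rw [phase, div_mul_eq_mul_div, mul_div_assoc]
  obtain ⟨k, hk⟩ := exists_schwartzMap_coe_eq_of_support_subset_annulus
    (G := fun ξ ↦ Complex.exp (Complex.I * (t * phase μ ξ : ℝ)) * g ξ) hlam
    ((Function.support_mul_subset_right _ _).trans hg) fun ξ hξ ↦
      (contDiffAt_const.mul (Complex.ofRealCLM.contDiff.contDiffAt.comp ξ
        (contDiffAt_const.mul (contDiffAt_phase hμ hξ)))).cexp.mul (g.smooth ⊤).contDiffAt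
  refine ⟨k, congrFun hk, ?_⟩
  rw [SchwartzMap.fourierInv_coe k, hk, prop1, ← SchwartzMap.fourier_coe,
    FourierTransform.fourier_fourierInv_eq]
  simp only [hphase]

lemma continuous_prop1_fourierInv (hμ : 0 < μ) (hlam : 0 < lam)
    (hg : Function.support g ⊆ annulus lam) (t : ℝ) : Continuous (prop1 μ t (𝓕⁻ g : 𝓢(ℝ, ℂ))) := by
  obtain ⟨k, -, hk⟩ := exists_prop1_fourierInv_eq hμ hlam hg t
  exact hk ▸ (𝓕⁻ k : 𝓢(ℝ, ℂ)).continuous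

lemma eLpNorm_two_fourierInv (g : 𝓢(ℝ, ℂ)) :
    eLpNorm (𝓕⁻ g : 𝓢(ℝ, ℂ)) 2 volume = eLpNorm g 2 volume := by
  have h := SchwartzMap.norm_fourier_toL2_eq (𝓕⁻ g : 𝓢(ℝ, ℂ))
  rw [FourierTransform.fourier_fourierInv_eq, SchwartzMap.norm_toLp, SchwartzMap.norm_toLp,
    ENNReal.toReal_eq_toReal_iff' (g.memLp 2 _).eLpNorm_ne_top
      ((𝓕⁻ g : 𝓢(ℝ, ℂ)).memLp 2 _).eLpNorm_ne_top] at h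
  exact h.symm

lemma eLpNorm_two_prop1_fourierInv (hμ : 0 < μ) (hlam : 0 < lam)
    (hg : Function.support g ⊆ annulus lam) (t : ℝ) :
    eLpNorm (prop1 μ t (𝓕⁻ g : 𝓢(ℝ, ℂ))) 2 volume = eLpNorm (𝓕⁻ g : 𝓢(ℝ, ℂ)) 2 volume := by
  obtain ⟨k, hk, hprop⟩ := exists_prop1_fourierInv_eq hμ hlam hg t
  rw [hprop, eLpNorm_two_fourierInv, eLpNorm_two_fourierInv]
  refine eLpNorm_congr_norm_ae (.of_forall fun ξ ↦ ?_)
  rw [hk, norm_mul, Complex.norm_exp_I_mul_ofReal, one_mul]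

/-- The space-time oscillation `e^{i(2πxξ + tφ_μ(ξ))}` of a linear wave of frequency `ξ`. -/
def planeWave (μ x t ξ : ℝ) : ℂ :=
  Complex.exp (Complex.I * (2 * Real.pi * x * ξ + t * phase μ ξ : ℝ))

lemma prop1_fourierInv_apply (hμ : 0 < μ) (hlam : 0 < lam)
    (hg : Function.support g ⊆ annulus lam) (t x : ℝ) :
    prop1 μ t (𝓕⁻ g : 𝓢(ℝ, ℂ)) x = ∫ ξ in annulus lam, g ξ * planeWave μ x t ξ := by
  obtain ⟨k, hk, hprop⟩ := exists_prop1_fourierInv_eq hμ hlam hg t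
  rw [hprop, SchwartzMap.fourierInv_coe, Real.fourierInv_eq',
    setIntegral_eq_integral_of_forall_compl_eq_zero fun ξ hξ ↦ by
      rw [Function.support_subset_iff'.1 hg ξ hξ, zero_mul]]
  refine integral_congr_ae (.of_forall fun ξ ↦ ?_)
  simp only [hk, smul_eq_mul, RCLike.inner_apply, conj_trivial, planeWave, Complex.ofReal_add,
    mul_add, Complex.exp_add]
  push_cast
  ring_nf

lemma measurable_planeWave (x : ℝ) : Measurable (Function.uncurry (planeWave μ x)) := by
  have := measurable_phase μ
  simp only [Function.uncurry_def, planeWave]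
  fun_prop

lemma enorm_setIntegral_planeWave_mul_conj_le (hμ : 0 < μ) (hlam : 0 < lam) (x y : ℝ) {t s : ℝ}
    (hts : t ≠ s) :
    ‖∫ ξ in annulus lam, planeWave μ x t ξ * conj (planeWave μ y s ξ)‖ₑ ≤
      ENNReal.ofReal (320 * dispersiveFactor μ lam) * rieszKernel (1 / 2) (t - s) := by
  have hA := dispersiveFactor_pos hμ hlam
  have hmul (ξ : ℝ) : planeWave μ x t ξ * conj (planeWave μ y s ξ) =
      Complex.exp (Complex.I * (2 * Real.pi * (x - y) * ξ + (t - s) * phase μ ξ : ℝ)) := by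
    rw [planeWave, planeWave, conj_exp_I_mul, ← Complex.exp_add, ← mul_add, ← Complex.ofReal_add]
    ring_nf
  simp only [hmul]
  rw [rieszKernel, ← ENNReal.ofReal_mul (by positivity), ← ofReal_norm]
  exact ENNReal.ofReal_le_ofReal
    (norm_setIntegral_annulus_exp_phase_le hμ hlam (sub_ne_zero.2 hts) _)

lemma setLIntegral_annulus_enorm_sq (hg : Function.support g ⊆ annulus lam) :
    ∫⁻ ξ in annulus lam, ‖g ξ‖ₑ ^ 2 = eLpNorm (𝓕⁻ g : 𝓢(ℝ, ℂ)) 2 volume ^ 2 := by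
  have hzero : Function.support (fun ξ ↦ ‖g ξ‖ₑ ^ 2) ⊆ annulus lam := by
    refine Function.support_subset_iff'.2 fun ξ hξ ↦ ?_
    rw [Function.support_subset_iff'.1 hg ξ hξ, enorm_zero, zero_pow two_ne_zero]
  have hsq := eLpNorm_nnreal_pow_eq_lintegral (f := g) (μ := volume) (p := 2) two_ne_zero
  simp only [NNReal.coe_ofNat, ENNReal.coe_ofNat, ENNReal.rpow_ofNat] at hsq
  rw [setLIntegral_eq_of_support_subset hzero, eLpNorm_two_fourierInv, hsq]

lemma eLpNorm_top_prop1_fourierInv_le (hμ : 0 < μ) (hlam : 0 < lam)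
    (hg : Function.support g ⊆ annulus lam) {x : ℕ → ℝ} (hx : DenseRange x) (t : ℝ) :
    eLpNorm (prop1 μ t (𝓕⁻ g : 𝓢(ℝ, ℂ))) ∞ volume ≤
      ⨆ n, ‖∫ ξ in annulus lam, g ξ * planeWave μ (x n) t ξ‖ₑ := by
  rw [eLpNorm_exponent_top]
  refine essSup_le_of_ae_le _ (.of_forall fun y ↦ ?_)
  refine hx.induction_on y
    (isClosed_le (continuous_prop1_fourierInv hμ hlam hg t).enorm continuous_const) fun n ↦ ?_
  simp only [prop1_fourierInv_apply hμ hlam hg]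
  exact le_iSup (fun n ↦ ‖∫ ξ in annulus lam, g ξ * planeWave μ (x n) t ξ‖ₑ) n

lemma lintegral_eLpNorm_top_prop1_pow_four_le (hμ : 0 < μ) (hlam : 0 < lam)
    (hg : Function.support g ⊆ annulus lam) :
    ∫⁻ t, eLpNorm (prop1 μ t (𝓕⁻ g : 𝓢(ℝ, ℂ))) ∞ volume ^ 4 ≤
      (ENNReal.ofReal (5120 * dispersiveFactor μ lam) *
        eLpNorm (𝓕⁻ g : 𝓢(ℝ, ℂ)) 2 volume ^ 2) ^ 2 := by
  have hmax := lintegral_iSup_enorm_integral_rpow_le one_half_pos one_half_lt_one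
    (fun n ↦ measurable_planeWave (μ := μ) (TopologicalSpace.denseSeq ℝ n))
    (fun n t ξ ↦ (Complex.norm_exp_I_mul_ofReal _).le)
    (fun m n t s ↦ enorm_setIntegral_planeWave_mul_conj_le hμ hlam _ _) g.continuous.measurable
    g.integrable.restrict
  have hconst : 8 / (1 - 1 / 2 : ℝ) * (320 * dispersiveFactor μ lam) =
      5120 * dispersiveFactor μ lam := by ring
  have htwo : 1 / (1 / 2 : ℝ) = (2 : ℕ) := by norm_num
  have hfour : 2 / (1 / 2 : ℝ) = (4 : ℕ) := by norm_num
  rw [setLIntegral_annulus_enorm_sq hg, ← ENNReal.ofReal_mul (by norm_num), hconst, htwo, hfour,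
    ENNReal.rpow_natCast] at hmax
  simp only [ENNReal.rpow_natCast] at hmax
  refine (lintegral_mono fun t ↦ ?_).trans hmax
  gcongr
  exact eLpNorm_top_prop1_fourierInv_le hμ hlam hg (TopologicalSpace.denseRange_denseSeq ℝ) t

end Wave

theorem strichartz_1d_general {χ : ℝ → ℝ} (hχ : ContDiff ℝ (⊤ : ℕ∞) χ)
    (hsupp : Function.support χ ⊆ Set.Ioo (-2) 2) (hone : ∀ s ∈ Set.Icc (-1 : ℝ) 1, χ s = 1)
    {q r : ℝ≥0∞} (hr : 2 ≤ r) (hadm : 2 / q = 1 / 2 - 1 / r) {μ lam : ℝ} (hμ : 0 < μ)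
    (hlam : 0 < lam) (f : 𝓢(ℝ, ℂ)) :
    timeNorm q (fun t ↦ eLpNorm (prop1 μ t (proj1 χ lam f)) r volume) ≤
      ENNReal.ofReal (5120 * dispersiveFactor μ lam) ^ (1 / 2 - 1 / r.toReal) *
        eLpNorm (proj1 χ lam f) 2 volume := by
  obtain ⟨g, hg, hproj⟩ := exists_proj1_eq_fourierInv hχ hsupp hone hlam f
  rw [hproj]
  exact timeNorm_eLpNorm_le_of_admissible
    (fun t ↦ (continuous_prop1_fourierInv hμ hlam hg t).aestronglyMeasurable) hr hadm
    ((𝓕⁻ g : 𝓢(ℝ, ℂ)).memLp 2 volume).eLpNorm_ne_top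
    (fun t ↦ (eLpNorm_two_prop1_fourierInv hμ hlam hg t).le)
    (lintegral_eLpNorm_top_prop1_pow_four_le hμ hlam hg)

/-- Frequency-localized Strichartz estimate in dimension one: for admissible
`(q,r)` with `2/q = 1/2 − 1/r`, there is `C = C(q,r)`, independent of `μ ∈ (0,1]` and `λ > 0`,
such that `‖S_{μ,1}(t) P_λ f‖_{L^q_t L^r_x} ≤ C (μ^{-1/2} λ^{-1/2} ⟨√μ λ⟩^{5/4})^{1/2−1/r}
‖P_λ f‖_{L^2}`. -/
theorem strichartz_1d (χ : ℝ → ℝ) (hχ : ContDiff ℝ (⊤ : ℕ∞) χ)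
    (hsupp : Function.support χ ⊆ Set.Ioo (-2 : ℝ) 2)
    (hone : ∀ s ∈ Set.Icc (-1 : ℝ) 1, χ s = 1)
    (q r : ℝ≥0∞) (hq : 2 < q) (hr2 : 2 ≤ r)
    (hadm : 2 / q = 1 / 2 - 1 / r) :
    ∃ C : ℝ, 0 < C ∧
      ∀ μ : ℝ, 0 < μ → μ ≤ 1 → ∀ lam : ℝ, 0 < lam → ∀ f : 𝓢(ℝ, ℂ),
        timeNorm q (fun t => eLpNorm (prop1 μ t (proj1 χ lam ⇑f)) r volume)
          ≤ ENNReal.ofReal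
              (C * (μ ^ (-(1 : ℝ) / 2) * lam ^ (-(1 : ℝ) / 2) *
                  jap (Real.sqrt μ * lam) ^ ((5 : ℝ) / 4)) ^ ((1 : ℝ) / 2 - 1 / r.toReal)) *
            eLpNorm (proj1 χ lam ⇑f) 2 volume := by
  refine ⟨5120 ^ (1 / 2 - 1 / r.toReal), by positivity, fun μ hμ _ lam hlam f ↦ ?_⟩
  have hA := dispersiveFactor_pos hμ hlam
  change _ ≤ ENNReal.ofReal (_ * dispersiveFactor μ lam ^ _) * _
  rw [← Real.mul_rpow (by norm_num) hA.le, ← ENNReal.ofReal_rpow_of_pos (by positivity)]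
  exact strichartz_1d_general hχ hsupp hone hr2 hadm hμ hlam f
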